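/- Let P ⊂ ℝ^n be a smooth full-dimensional lattice polytope. Then cd(P) ≥ (n+3)/2 if and only if μ(P) = τ(P) = cd(P) and cd(P) > n/2 + 1. -/

import Mathlib

noncomputable section

open MeasureTheory Pointwise

/-- A point of `ℝ^n` is a lattice point if all its coordinates are integers. -/
def IsLatticePt {n : ℕ} (x : Fin n → ℝ) : Prop := ∀ i, ∃ z : ℤ, x i = (z : ℝ)

/-- A lattice polytope is the convex hull of a finite set of lattice points. -/
def IsLatticePolytope {n : ℕ} (P : Set (Fin n → ℝ)) : Prop :=
  ∃ V : Finset (Fin n → ℝ), (∀ v ∈ V, IsLatticePt v) ∧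
    P = convexHull ℝ (↑V : Set (Fin n → ℝ))

/-- A rational polytope is the convex hull of a finite set of rational points. -/
def IsRatPolytope {n : ℕ} (P : Set (Fin n → ℝ)) : Prop :=
  ∃ V : Finset (Fin n → ℝ), (∀ v ∈ V, ∀ i, ∃ q : ℚ, v i = (q : ℝ)) ∧
    P = convexHull ℝ (↑V : Set (Fin n → ℝ))

/-- The vertices `0, e_1, …, e_t` of the standard unimodular simplex `Δ_t ⊆ ℝ^t`. -/
def stdSimplexVert (t : ℕ) (k : Fin (t + 1)) : Fin t → ℝ :=
  fun j => if (k : ℕ) = (j : ℕ) + 1 then 1 else 0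

/-- The standard unimodular simplex `Δ_t = conv(0, e_1, …, e_t) ⊆ ℝ^t`. -/
def unimodSimplex (t : ℕ) : Set (Fin t → ℝ) := convexHull ℝ (Set.range (stdSimplexVert t))

/-- The interior of the dilate `s • P` contains a lattice point. -/
def HasInteriorLatticePt {n : ℕ} (P : Set (Fin n → ℝ)) (s : ℕ) : Prop :=
  ∃ x ∈ interior ((s : ℝ) • P), IsLatticePt x

/-- The codegree `cd(P)`: the least positive integer `t` such that the interior of `t • P`
contains a lattice point. -/
def codeg {n : ℕ} (P : Set (Fin n → ℝ)) : ℕ :=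
  sInf {t : ℕ | 0 < t ∧ HasInteriorLatticePt P t}

/-- Pairing of an integer vector with a real vector. -/
def iprod {n : ℕ} (a : Fin n → ℤ) (x : Fin n → ℝ) : ℝ := ∑ i, (a i : ℝ) * x i

/-- An integer vector is primitive if it is nonzero and its coordinates have no common
non-unit divisor. -/
def IsPrimitive {n : ℕ} (a : Fin n → ℤ) : Prop :=
  a ≠ 0 ∧ ∀ d : ℤ, (∀ i, d ∣ a i) → IsUnit d

/-- `(a, b)` is a facet inequality of `P ⊆ ℝ^n`: `a` is a primitive integer inner normal,
`b = min_{x ∈ P} ⟨a, x⟩`, and the corresponding face has dimension `n - 1`. -/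
def IsFacetIneq {n : ℕ} (P : Set (Fin n → ℝ)) (a : Fin n → ℤ) (b : ℝ) : Prop :=
  IsPrimitive a ∧ (∀ x ∈ P, b ≤ iprod a x) ∧
  {x ∈ P | iprod a x = b}.Nonempty ∧
  Module.finrank ℝ ↥(vectorSpan ℝ {x ∈ P | iprod a x = b}) = n - 1

/-- The adjoint polytope `P^(s) = {x : ⟨a_F, x⟩ ≥ b_F + s for all facets F}`. -/
def adjointPoly {n : ℕ} (P : Set (Fin n → ℝ)) (s : ℝ) : Set (Fin n → ℝ) :=
  {x | ∀ a b, IsFacetIneq P a b → b + s ≤ iprod a x}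

/-- The set `{s > 0 : P^(s) ≠ ∅}`; the ℚ-codegree is `μ(P) = (sSup (muSet P))⁻¹`. -/
def muSet {n : ℕ} (P : Set (Fin n → ℝ)) : Set ℝ :=
  {s : ℝ | 0 < s ∧ (adjointPoly P s).Nonempty}

/-- `F` is a (nonempty, exposed) face of the polytope `P`; with `u = 0` this includes
`P` itself. -/
def IsFace {n : ℕ} (P F : Set (Fin n → ℝ)) : Prop :=
  F.Nonempty ∧ ∃ (u : (Fin n → ℝ) →ₗ[ℝ] ℝ) (c : ℝ),
    (∀ x ∈ P, c ≤ u x) ∧ F = {x ∈ P | u x = c}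

/-- The dimension of a face (or polytope): the rank of its direction vector space. -/
def fdim {n : ℕ} (F : Set (Fin n → ℝ)) : ℕ := Module.finrank ℝ ↥(vectorSpan ℝ F)

/-- `vol` is the relative lattice volume of `F`: the Lebesgue volume of the image of `F`
under an affine isomorphism of `aff F` with `ℝ^{dim F}` carrying `(aff F) ∩ ℤ^n` onto
`ℤ^{dim F}`. -/
def HasRelVol {n : ℕ} (F : Set (Fin n → ℝ)) (vol : ℝ) : Prop :=
  ∃ T : (Fin n → ℝ) →ᵃ[ℝ] (Fin (fdim F) → ℝ),
    Set.BijOn T (affineSpan ℝ F : Set (Fin n → ℝ)) Set.univ ∧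
    T '' ((affineSpan ℝ F : Set (Fin n → ℝ)) ∩ {x | IsLatticePt x}) = {y | IsLatticePt y} ∧
    vol = (volume (T '' F)).toReal

/-- The alternating face sum `Σ_F (-1)^{n - dim F} (dim F + 1)! Vol(F)`. -/
def faceSum {n : ℕ} (𝓕 : Finset (Set (Fin n → ℝ))) (volf : Set (Fin n → ℝ) → ℝ) : ℝ :=
  ∑ F ∈ 𝓕, (-1 : ℝ) ^ (n - fdim F) * (Nat.factorial (fdim F + 1) : ℝ) * volf F

/-- The alternating sum over all nonempty faces of `P` of
`(-1)^{n - dim F} (dim F + 1)! Vol(F)` vanishes. -/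
def FaceSumZero {n : ℕ} (P : Set (Fin n → ℝ)) : Prop :=
  ∃ (𝓕 : Finset (Set (Fin n → ℝ))) (volf : Set (Fin n → ℝ) → ℝ),
    (∀ F, F ∈ 𝓕 ↔ IsFace P F) ∧ (∀ F ∈ 𝓕, HasRelVol F (volf F)) ∧
    faceSum 𝓕 volf = 0

/-- A polytope `R ⊆ ℝ^n` (of dimension `d = fdim R`) is smooth: at each vertex there are
exactly `d` edges, whose primitive integer direction vectors form a ℤ-basis of the
lattice `(vectorSpan R) ∩ ℤ^n`. -/
def IsSmoothPoly {n : ℕ} (R : Set (Fin n → ℝ)) : Prop :=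
  ∀ v ∈ Set.extremePoints ℝ R,
    ∃ (w : Fin (fdim R) → (Fin n → ℤ)) (c : Fin (fdim R) → ℝ),
      (∀ i, 0 < c i) ∧ (∀ i, IsPrimitive (w i)) ∧
      LinearIndependent ℝ (fun i => ((fun j => ((w i j : ℝ))) : Fin n → ℝ)) ∧
      (∀ i, ((fun j => ((w i j : ℝ))) : Fin n → ℝ) ∈ vectorSpan ℝ R) ∧
      (∀ z : Fin n → ℤ, ((fun j => (z j : ℝ)) : Fin n → ℝ) ∈ vectorSpan ℝ R →
        ∃ m : Fin (fdim R) → ℤ,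
          ((fun j => (z j : ℝ)) : Fin n → ℝ) =
            ∑ i, (m i : ℝ) • ((fun j => ((w i j : ℝ))) : Fin n → ℝ)) ∧
      (∀ F : Set (Fin n → ℝ), (IsFace R F ∧ v ∈ F ∧ fdim F = 1) ↔
        ∃ i, F = segment ℝ v (v + c i • ((fun j => ((w i j : ℝ))) : Fin n → ℝ)))

/-- The real-linear map `ℝ^n → ℝ^t` induced by an integer matrix. -/
def matMap {t n : ℕ} (A : Matrix (Fin t) (Fin n) ℤ) : (Fin n → ℝ) → (Fin t → ℝ) :=
  fun x k => ∑ j, (A k j : ℝ) * x j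

/-- The piece `R_k = P ∩ π_ℝ^{-1}(v_k)` of a Cayley sum over the `k`-th vertex of `Δ_t`. -/
def cayleyPiece {t n : ℕ} (A : Matrix (Fin t) (Fin n) ℤ) (P : Set (Fin n → ℝ))
    (k : Fin (t + 1)) : Set (Fin n → ℝ) :=
  {x ∈ P | matMap A x = stdSimplexVert t k}

/-- Two polytopes are normally equivalent (have the same normal fan): for all linear
functionals `u, v`, the minimizing face of `u` equals that of `v` on `R` precisely when the
same holds on `S`. -/
def NormEquiv {n : ℕ} (R S : Set (Fin n → ℝ)) : Prop :=
  ∀ u v : (Fin n → ℝ) →ₗ[ℝ] ℝ,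
    ({x ∈ R | ∀ y ∈ R, u x ≤ u y} = {x ∈ R | ∀ y ∈ R, v x ≤ v y}) ↔
    ({x ∈ S | ∀ y ∈ S, u x ≤ u y} = {x ∈ S | ∀ y ∈ S, v x ≤ v y})

/-- `Q` is the Cayley sum, via the surjective lattice projection `A : ℤ^n → ℤ^t`, of the
normally equivalent polytopes `R_k = Q ∩ π_ℝ^{-1}(v_k)`: `π_ℝ` maps `Q` onto `Δ_t`. -/
def IsCayleyWith {n t : ℕ} (Q : Set (Fin n → ℝ)) (A : Matrix (Fin t) (Fin n) ℤ) : Prop :=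
  (∀ y : Fin t → ℤ, ∃ x : Fin n → ℤ, A.mulVec x = y) ∧
  matMap A '' Q = unimodSimplex t ∧
  ∀ k l : Fin (t + 1), NormEquiv (cayleyPiece A Q k) (cayleyPiece A Q l)

/-- The unimodular affine map `x ↦ Ux + w`. -/
def unimodMap {n : ℕ} (U : Matrix (Fin n) (Fin n) ℤ) (w : Fin n → ℤ) :
    (Fin n → ℝ) → (Fin n → ℝ) :=
  fun x i => (∑ j, (U i j : ℝ) * x j) + (w i : ℝ)

/-- The set `{s > 0 : P^(s) has the same normal fan as P}`; the nef value is
`τ(P) = (sSup (tauSet P))⁻¹`. -/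
def tauSet {n : ℕ} (P : Set (Fin n → ℝ)) : Set ℝ :=
  {s : ℝ | 0 < s ∧ NormEquiv (adjointPoly P s) P}


structure SD {n : ℕ} (P : Set (Fin n → ℝ)) (ι : Type) where
  p : ι → Fin n → ℝ
  inj : Function.Injective p
  hull : P = convexHull ℝ (Set.range p)
  E : ι → Module.Basis (Fin n) ℝ (Fin n → ℝ)
  len : ι → Fin n → ℕ
  len_pos : ∀ w i, 1 ≤ len w i
  nb : ι → Fin n → ι
  p_nb : ∀ w i, p (nb w i) = p w + (len w i : ℝ) • E w i
  pos : ∀ w, ∀ x ∈ P, ∀ i, 0 ≤ (E w).coord i (x - p w)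
  bk : ι → Fin n → Fin n
  E_bk : ∀ w i, E (nb w i) (bk w i) = - E w i
  lat_p : ∀ w, IsLatticePt (p w)
  lat_E : ∀ w i, IsLatticePt (E w i)
  lat_coord : ∀ w i z, IsLatticePt z → ∃ m : ℤ, (E w).coord i z = m

namespace SD

variable {n : ℕ} {P : Set (Fin n → ℝ)} {ι : Type} (D : SD P ι)

def X (w : ι) (i : Fin n) (x : Fin n → ℝ) : ℝ := (D.E w).coord i (x - D.p w)

def a (w : ι) (i j : Fin n) : ℝ := (D.E (D.nb w i)).coord (D.bk w i) (D.E w j)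

def U (w : ι) (i : Fin n) (x : Fin n → ℝ) : ℝ := D.X (D.nb w i) (D.bk w i) x

def hat (w : ι) (s : ℝ) : Fin n → ℝ := D.p w + s • ∑ i, D.E w i

def kap (w : ι) (i : Fin n) : ℝ := 1 - ∑ j, D.a w i j

def lam (w : ι) (i : Fin n) (s : ℝ) : ℝ := D.len w i - s * D.kap w i

lemma conv (D : SD P ι) : Convex ℝ P := by
  have h := D.hull
  generalize Set.range D.p = R at h
  rw [h]; exact convex_convexHull ℝ _

lemma p_mem (w : ι) : D.p w ∈ P := by
  exact D.hull.symm.subset (subset_convexHull ℝ _ ⟨w, rfl⟩)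

lemma X_nonneg (w i) {x} (hx : x ∈ P) : 0 ≤ D.X w i x := D.pos w x hx i

lemma coord_self (w : ι) (i j : Fin n) : (D.E w).coord i (D.E w j) = if i = j then 1 else 0 := by
  simp [Module.Basis.coord_apply, Finsupp.single_apply, eq_comm]

lemma X_add (w i) (x y : Fin n → ℝ) : D.X w i (x + y) = D.X w i x + (D.E w).coord i y := by
  unfold X; rw [← map_add]; congr 1; abel

lemma X_p_self (w i) : D.X w i (D.p w) = 0 := by simp [X]

lemma sum_coord (w) (y : Fin n → ℝ) : ∑ i, (D.E w).coord i y • D.E w i = y := by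
  simp only [Module.Basis.coord_apply]; exact (D.E w).sum_repr y

lemma eq_sum_X (w) (x : Fin n → ℝ) : x = D.p w + ∑ i, D.X w i x • D.E w i := by
  unfold X; rw [sum_coord]; abel

lemma edge_mem (w i) (t : ℝ) (h0 : 0 ≤ t) (h1 : t ≤ D.len w i) :
    D.p w + t • D.E w i ∈ P := by
  have hl : (0:ℝ) < D.len w i := by exact_mod_cast D.len_pos w i
  have := D.conv.add_smul_sub_mem (D.p_mem w) (D.p_mem (D.nb w i)) (t := t / D.len w i)
    ⟨by positivity, by rw [div_le_one hl]; exact h1⟩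
  rw [D.p_nb, add_sub_cancel_left, smul_smul, div_mul_cancel₀ _ hl.ne'] at this
  exact this

lemma edge_mem1 (w i) : D.p w + D.E w i ∈ P := by
  have := D.edge_mem w i 1 zero_le_one (by exact_mod_cast D.len_pos w i)
  simpa using this

lemma facet_eq (v : ι) (k : Fin n) (w : ι) (h : D.X v k (D.p w) = 0) :
    ∃ i, (D.E w).coord i = (D.E v).coord k ∧ ∀ x, D.X v k x = D.X w i x := by
  set f := (D.E v).coord k with hf
  have hne : ∃ i, f (D.E w i) ≠ 0 := by
    by_contra hcon
    push Not at hcon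
    have : f = 0 := (D.E w).ext (by simpa using hcon)
    have h1 : f (D.E v k) = 1 := by rw [hf, coord_self]; simp
    rw [this] at h1; simp at h1
  have hnn : ∀ i, 0 ≤ f (D.E w i) := by
    intro i
    have h1 := D.X_nonneg v k (D.edge_mem1 w i)
    rw [X_add, h] at h1
    linarith
  obtain ⟨i, hi⟩ := hne
  have hip : 0 < f (D.E w i) := lt_of_le_of_ne (hnn i) (Ne.symm hi)
  -- points on the facet have X w i = 0
  have key : ∀ y ∈ P, D.X v k y = 0 → D.X w i y = 0 := by
    intro y hy hy0
    have h1 : D.X v k y = ∑ j, D.X w j y * f (D.E w j) := by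
      conv_lhs => rw [D.eq_sum_X w y]
      rw [X_add, h, zero_add, map_sum]
      simp [hf]
    rw [hy0] at h1
    have h2 := (Finset.sum_eq_zero_iff_of_nonneg (fun j _ => mul_nonneg (D.X_nonneg w j hy) (hnn j))).1 h1.symm i (Finset.mem_univ _)
    rcases mul_eq_zero.1 h2 with h3 | h3
    · exact h3
    · exact absurd h3 hi
  have hv0 : D.X w i (D.p v) = 0 := key _ (D.p_mem v) (D.X_p_self v k)
  have hj : ∀ j, j ≠ k → (D.E w).coord i (D.E v j) = 0 := by
    intro j hjk
    have h1 := key _ (D.edge_mem1 v j) (by rw [X_add, X_p_self, coord_self]; simp [hjk.symm])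
    rw [X_add, hv0] at h1; linarith
  have hprop : (D.E w).coord i = (D.E w).coord i (D.E v k) • f := by
    apply (D.E v).ext
    intro j
    by_cases hjk : j = k
    · subst hjk; simp [hf]
    · rw [hj j hjk]; simp [hf, hjk]
  obtain ⟨c, hc⟩ := D.lat_coord w i _ (D.lat_E v k)
  obtain ⟨d, hd⟩ := D.lat_coord v k _ (D.lat_E w i)
  have hmul : (c : ℝ) * d = 1 := by
    have := congrArg (fun g => g (D.E w i)) hprop
    simp only [LinearMap.smul_apply, smul_eq_mul] at this
    rw [D.coord_self, hc, hf, hd] at this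
    simpa using this.symm
  have hdp : 0 < d := by rw [hf, hd] at hip; exact_mod_cast hip
  have hmul' : c * d = 1 := by exact_mod_cast hmul
  have hd1 : d = 1 := by
    rcases Int.isUnit_iff.1 (IsUnit.of_mul_eq_one c (by rw [mul_comm]; exact hmul')) with h | h
    · exact h
    · omega
  have hc1 : c = 1 := by subst hd1; simpa using hmul'
  have hcoord : (D.E w).coord i = f := by rw [hprop, hc, hc1]; simp
  refine ⟨i, hcoord, fun x => ?_⟩
  have : D.X w i x = f (x - D.p w) := by unfold X; rw [hcoord]
  rw [this]
  have h3 : f (D.p w - D.p v) = 0 := h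
  unfold X
  rw [← hf, ← sub_add_sub_cancel x (D.p w) (D.p v), map_add, h3, add_zero]

lemma a_self (w i) : D.a w i i = -1 := by
  unfold a
  have : D.E w i = - D.E (D.nb w i) (D.bk w i) := by rw [D.E_bk]; simp
  rw [this, map_neg, coord_self]; simp

lemma U_p (w i) : D.U w i (D.p w) = D.len w i := by
  have h := D.X_add (D.nb w i) (D.bk w i) (D.p w) ((D.len w i : ℝ) • D.E w i)
  rw [← D.p_nb, X_p_self, map_smul] at h
  have h2 := D.a_self w i
  unfold a at h2
  rw [h2] at h
  simp only [smul_eq_mul] at h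
  unfold U; linarith

lemma U_add_E (w i) (x) (t : ℝ) (j) : D.U w i (x + t • D.E w j) = D.U w i x + t * D.a w i j := by
  unfold U a; rw [X_add, map_smul, smul_eq_mul]

lemma U_nonneg (w i) {x} (hx : x ∈ P) : 0 ≤ D.U w i x := D.X_nonneg _ _ hx

lemma U_eq (w i) (x) : D.U w i x = D.len w i + ∑ j, D.X w j x * D.a w i j := by
  conv_lhs => rw [D.eq_sum_X w x]
  unfold U; rw [X_add, map_sum]
  have := D.U_p w i; unfold U at this; rw [this]
  simp [a]

lemma X_hat (w i s) : D.X w i (D.hat w s) = s := by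
  unfold hat
  rw [X_add, X_p_self, map_smul, map_sum]
  simp only [coord_self]
  simp

lemma X_p_nb (w i j) (h : j ≠ i) : D.X w j (D.p (D.nb w i)) = 0 := by
  rw [D.p_nb, X_add, X_p_self, map_smul, coord_self]; simp [h]

lemma ext_X (w) {x y : Fin n → ℝ} (h : ∀ i, D.X w i x = D.X w i y) : x = y := by
  rw [D.eq_sum_X w x, D.eq_sum_X w y]; simp [h]

lemma hat_nb (w i s) : D.hat (D.nb w i) s = D.hat w s + D.lam w i s • D.E w i := by
  have h1 : ∀ j, j ≠ i → D.X w j (D.hat (D.nb w i) s) = s := by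
    intro j hj
    obtain ⟨k, -, hk⟩ := D.facet_eq w j (D.nb w i) (D.X_p_nb w i j hj)
    rw [hk, X_hat]
  obtain ⟨m, hm⟩ : ∃ m, D.hat (D.nb w i) s = D.hat w s + m • D.E w i := by
    refine ⟨D.X w i (D.hat (D.nb w i) s) - s, D.ext_X w ?_⟩
    intro j
    rw [X_add, X_hat, map_smul, coord_self]
    by_cases hj : j = i
    · subst hj; simp
    · simp [hj, h1 j hj]
  rw [hm]
  have h2 : D.U w i (D.hat (D.nb w i) s) = s := D.X_hat _ _ _
  rw [hm, U_add_E, a_self, U_eq] at h2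
  simp only [X_hat] at h2
  rw [← Finset.mul_sum] at h2
  congr 2
  unfold lam kap
  linarith

lemma P1 (w) {i j} (hij : i ≠ j) :
    D.p w + ((D.len w i : ℝ) + D.a w i j) • D.E w i + D.E w j ∈ P := by
  set w' := D.nb w i with hw'
  obtain ⟨k, hkc, hk⟩ := D.facet_eq w j w' (D.X_p_nb w i j hij.symm)
  have hkb : k ≠ D.bk w i := by
    rintro rfl
    have h1 := hk (D.p w)
    rw [X_p_self] at h1
    have h2 := D.U_p w i
    unfold U at h2
    rw [h2] at h1
    have := D.len_pos w i
    have h3 : (D.len w i) = 0 := by exact_mod_cast h1.symm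
    omega
  have hE : D.E w' k = D.E w j + D.a w i j • D.E w i := by
    have hc : ∀ l, l ≠ i → (D.E w).coord l (D.E w' k) = if l = j then 1 else 0 := by
      intro l hl
      obtain ⟨k', hk'c, hk'⟩ := D.facet_eq w l w' (D.X_p_nb w i l hl)
      rw [← hk'c, coord_self]
      by_cases hlj : l = j
      · subst hlj
        have : k' = k := by
          by_contra hne
          have h1 := D.coord_self w' k' k
          rw [hk'c, ← hkc, coord_self] at h1
          simp [hne] at h1
        simp [this]
      · have : k' ≠ k := by
          rintro rfl
          have h1 := D.coord_self w l j
          rw [← hk'c, hkc, coord_self] at h1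
          simp [hlj] at h1
        simp [this, hlj]
    obtain ⟨t, ht⟩ : ∃ t : ℝ, D.E w' k = D.E w j + t • D.E w i := by
      refine ⟨(D.E w).coord i (D.E w' k), (D.E w).ext_elem ?_⟩
      intro l
      have e1 : ∀ z, (D.E w).repr z l = (D.E w).coord l z := fun z => rfl
      rw [e1, e1, map_add, map_smul, coord_self, coord_self]
      by_cases hl : l = i
      · subst hl; simp [hij]
      · rw [hc l hl]; simp [hl]
    have h0 : (D.E w').coord (D.bk w i) (D.E w' k) = 0 := by
      rw [coord_self]; simp [hkb.symm]
    rw [ht, map_add, map_smul] at h0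
    have h1 := D.a_self w i
    unfold a at h1
    rw [← hw'] at h1
    rw [h1] at h0
    have : t = D.a w i j := by
      unfold a; rw [← hw']; simp only [smul_eq_mul] at h0; linarith
    rw [ht, this]
  have := D.edge_mem1 w' k
  rw [hE, hw', D.p_nb] at this
  convert this using 1
  rw [add_smul]; abel

lemma a_ge (w) {i j} (hij : i ≠ j) : - (D.len w i : ℝ) ≤ D.a w i j := by
  have := D.X_nonneg w i (D.P1 w hij)
  rw [X_add, X_add, X_p_self, map_smul, coord_self, coord_self] at this
  simp [hij] at this
  linarith

lemma a_int (w i j) : ∃ m : ℤ, D.a w i j = m := D.lat_coord _ _ _ (D.lat_E w j)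

lemma mem_of_ge (w) {i j} {t : ℝ} (h0 : 0 ≤ t) (hij : i ≠ j) (h : t ≤ (D.len w i : ℝ) + D.a w i j) :
    D.p w + t • D.E w i + D.E w j ∈ P := by
  rcases h0.eq_or_lt with h0 | h0
  · rw [← h0]; simpa using D.edge_mem1 w j
  set q := (D.len w i : ℝ) + D.a w i j
  have hq : 0 < q := by linarith
  have := D.conv.add_smul_sub_mem (D.edge_mem1 w j) (D.P1 w hij) (t := t / q)
    ⟨by positivity, by rw [div_le_one hq]; exact h⟩
  convert this using 1
  rw [show D.p w + ((D.len w i : ℝ) + D.a w i j) • D.E w i + D.E w j - (D.p w + D.E w j) = q • D.E w i by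
    simp only [q]; abel, smul_smul, div_mul_cancel₀ _ hq.ne']
  abel

/-- adjacency -/
def adj (w : ι) (i j : Fin n) : Prop := D.p w + D.E w i + D.E w j ∉ P

lemma adj_symm {w i j} (h : D.adj w i j) : D.adj w j i := by
  unfold adj at *; rwa [add_right_comm]

lemma adj_len_eq {w i j} (hij : i ≠ j) (h : D.adj w i j) : (D.len w i : ℝ) + D.a w i j = 0 := by
  have h1 := D.a_ge w hij
  by_contra hne
  apply h
  obtain ⟨m, hm⟩ := D.a_int w i j
  have : (1 : ℝ) ≤ (D.len w i : ℝ) + D.a w i j := by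
    rw [hm] at h1 hne ⊢
    have h2 : (0:ℤ) ≤ (D.len w i : ℤ) + m := by
      have : (0:ℝ) ≤ (D.len w i : ℝ) + m := by linarith
      exact_mod_cast this
    have h3 : (D.len w i : ℤ) + m ≠ 0 := by
      intro h; apply hne; exact_mod_cast h
    have h4 : (1:ℤ) ≤ (D.len w i : ℤ) + m := by omega
    exact_mod_cast h4
  have := D.mem_of_ge w zero_le_one hij this
  simpa using this

lemma adj_len2 {w i j} (hij : i ≠ j) (h : D.adj w i j) : D.len w j = 1 := by
  have h1 := D.adj_len_eq hij h
  have h2 := D.U_nonneg w i (D.edge_mem w j (D.len w j) (by positivity) le_rfl)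
  rw [U_add_E, U_p] at h2
  have h3 : D.a w i j = - D.len w i := by linarith
  rw [h3] at h2
  have h4 : (D.len w i : ℝ) * (D.len w j) ≤ D.len w i := by linarith
  have h5 : D.len w i * D.len w j ≤ D.len w i := by exact_mod_cast h4
  have h6 := D.len_pos w i
  have h7 := D.len_pos w j
  nlinarith

lemma adj_len1 {w i j} (hij : i ≠ j) (h : D.adj w i j) : D.len w i = 1 :=
  D.adj_len2 hij.symm (D.adj_symm h)

lemma adj_a {w i j} (hij : i ≠ j) (h : D.adj w i j) : D.a w i j = -1 := by
  have h1 := D.adj_len_eq hij h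
  rw [D.adj_len1 hij h] at h1
  push_cast at h1; linarith

lemma adj_of_a {w i j} (hl : D.len w i = 1) (h : D.a w i j = -1) : D.adj w i j := by
  intro hmem
  have h2 := D.U_nonneg w i hmem
  have h3 := D.U_add_E w i (D.p w + (1:ℝ) • D.E w i) 1 j
  rw [D.U_add_E w i (D.p w), U_p, a_self, h, hl] at h3
  simp only [one_smul] at h3
  rw [h3] at h2
  norm_num at h2

lemma adj_U {w i j} (hij : i ≠ j) (h : D.adj w i j) (l) : D.a w i l = D.a w j l := by
  have hli := D.adj_len1 hij h
  have hlj := D.adj_len2 hij h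
  have ha := D.adj_a hij h
  have h0 : D.U w i (D.p (D.nb w j)) = 0 := by
    rw [D.p_nb, U_add_E, U_p, ha, hli, hlj]; norm_num
  obtain ⟨k, hkc, hk⟩ := D.facet_eq _ _ _ h0
  have hkb : k = D.bk w j := by
    by_contra hne
    have h1 := hk (D.p w)
    have h2 := D.U_p w i
    unfold U at h2
    rw [h2, hli] at h1
    have h3 : D.p w = D.p (D.nb w j) + (D.len w j : ℝ) • D.E (D.nb w j) (D.bk w j) := by
      rw [D.E_bk, D.p_nb]; simp
    rw [h3, X_add, X_p_self, map_smul, coord_self] at h1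
    simp [hne] at h1
  unfold a
  rw [← hkc, hkb]

lemma adj_trans {w i j k} (hij : i ≠ j) (hjk : j ≠ k) 
    (h1 : D.adj w i j) (h2 : D.adj w j k) : D.adj w i k := by
  apply D.adj_of_a (D.adj_len1 hij h1)
  rw [D.adj_U hij h1, D.adj_a hjk h2]

def rel (w : ι) : Setoid (Fin n) where
  r i j := i = j ∨ D.adj w i j
  iseqv := {
    refl := fun i => Or.inl rfl
    symm := by
      rintro i j (h | h)
      · exact Or.inl h.symm
      · exact Or.inr (D.adj_symm h)
    trans := by
      rintro i j k (h | h) (h' | h')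
      · exact Or.inl (h.trans h')
      · subst h; exact Or.inr h'
      · subst h'; exact Or.inr h
      · by_cases hij : i = j
        · subst hij; exact Or.inr h'
        by_cases hjk : j = k
        · subst hjk; exact Or.inr h
        by_cases hik : i = k
        · exact Or.inl hik
        exact Or.inr (D.adj_trans hij hjk h h') }

end SD

lemma exists_derange {n : ℕ} (c : Fin n → ℕ)
    (h : ∀ v, 2 * (Finset.univ.filter (fun i => c i = v)).card ≤ n) :
    ∃ π : Equiv.Perm (Fin n), ∀ i, c i ≠ c (π i) := by
  rcases Nat.eq_zero_or_pos n with hn | hn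
  · subst hn; exact ⟨1, fun i => i.elim0⟩
  have : NeZero n := ⟨hn.ne'⟩
  set σ := Tuple.sort c with hσ
  have hmono : Monotone (c ∘ σ) := Tuple.monotone_sort c
  -- intervals with constant value are short
  have hshort : ∀ i j : Fin n, i ≤ j → c (σ i) = c (σ j) → 2 * (j.val - i.val + 1) ≤ n := by
    intro i j hij hc
    refine le_trans ?_ (h (c (σ i)))
    have : ((Finset.Icc i j).map σ.toEmbedding) ⊆ Finset.univ.filter (fun k => c k = c (σ i)) := by
      intro k hk
      simp only [Finset.mem_map, Finset.mem_Icc, Equiv.coe_toEmbedding] at hk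
      obtain ⟨l, ⟨h1, h2⟩, rfl⟩ := hk
      have h3 := hmono h1
      have h4 := hmono h2
      simp only [Function.comp] at h3 h4
      simp only [Finset.mem_filter, Finset.mem_univ, true_and]
      omega
    have h2 := Finset.card_le_card this
    rw [Finset.card_map, Fin.card_Icc] at h2
    have : i.val ≤ j.val := hij
    omega
  let m : Fin n := ⟨n / 2, by omega⟩
  refine ⟨(σ.symm.trans (Equiv.addRight m)).trans σ, fun i => ?_⟩
  obtain ⟨k, rfl⟩ := σ.surjective i
  simp only [Equiv.trans_apply, Equiv.symm_apply_apply, Equiv.coe_addRight]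
  intro hc
  have hv : (k + m).val = (k.val + n / 2) % n := by rw [Fin.val_add]
  have hk := k.isLt
  by_cases hlt : k.val + n / 2 < n
  · rw [Nat.mod_eq_of_lt hlt] at hv
    have := hshort k (k + m) (by rw [Fin.le_def]; omega) hc
    omega
  · have h5 : (k.val + n / 2) % n = k.val + n / 2 - n := by
      rw [Nat.mod_eq_sub_mod (by omega), Nat.mod_eq_of_lt (by omega)]
    rw [h5] at hv
    have := hshort (k + m) k (by rw [Fin.le_def]; omega) hc.symm
    omega

namespace SD

variable {n : ℕ} {P : Set (Fin n → ℝ)} {ι : Type} (D : SD P ι)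

lemma mem_of_X [Finite ι] [Nonempty ι] {x : Fin n → ℝ} (h : ∀ w i, 0 ≤ D.X w i x) : x ∈ P := by
  by_contra hx
  have hcl : IsClosed P := by
    have := (Set.finite_range D.p).isClosed_convexHull ℝ
    rwa [← D.hull] at this
  obtain ⟨f, u, hf1, hf2⟩ := geometric_hahn_banach_point_closed D.conv hcl hx
  obtain ⟨w, hw⟩ := Finite.exists_min (fun w => f (D.p w))
  have hmin : ∀ y ∈ P, f (D.p w) ≤ f y := by
    have hs : P ⊆ {y | f (D.p w) ≤ f y} := by
      have hsub : convexHull ℝ (Set.range D.p) ⊆ {y | f (D.p w) ≤ f y} := by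
        apply convexHull_min
        · rintro _ ⟨v, rfl⟩; exact hw v
        · exact convex_halfSpace_ge f.toLinearMap.isLinear _
      exact D.hull.subset.trans hsub
    exact fun y hy => hs hy
  have h1 : f x = f (D.p w) + ∑ i, D.X w i x * f (D.E w i) := by
    conv_lhs => rw [D.eq_sum_X w x]
    simp
  have h2 : 0 ≤ ∑ i, D.X w i x * f (D.E w i) := by
    apply Finset.sum_nonneg
    intro i _
    apply mul_nonneg (h w i)
    have := hmin _ (D.edge_mem1 w i)
    rw [map_add] at this; linarith
  have := hf2 _ (D.p_mem w)
  linarith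

lemma continuous_X (w i) : Continuous (D.X w i) := by
  unfold X
  exact (LinearMap.continuous_of_finiteDimensional _).comp (continuous_id.sub continuous_const)

lemma mem_interior [Finite ι] [Nonempty ι] {x : Fin n → ℝ} (h : ∀ w i, 0 < D.X w i x) :
    x ∈ interior P := by
  have hopen : IsOpen {x | ∀ w i, 0 < D.X w i x} := by
    simp only [Set.ofPred_forall]
    exact isOpen_iInter_of_finite fun w => isOpen_iInter_of_finite fun i =>
      isOpen_lt continuous_const (D.continuous_X w i)
  exact interior_maximal (fun y hy => D.mem_of_X (fun w i => (hy w i).le)) hopen h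

lemma interior_X {x : Fin n → ℝ} (hx : x ∈ interior P) (w i) : 0 < D.X w i x := by
  have h1 : Filter.Tendsto (fun t : ℝ => x - t • D.E w i) (nhds 0) (nhds x) := by
    have : Continuous (fun t : ℝ => x - t • D.E w i) := by fun_prop
    have h2 := this.tendsto 0
    simpa using h2
  have h2 := h1.eventually (mem_interior_iff_mem_nhds.1 hx)
  have h3 : ∀ᶠ t in nhdsWithin (0:ℝ) (Set.Ioi 0), x - t • D.E w i ∈ P :=
    h2.filter_mono nhdsWithin_le_nhds
  obtain ⟨t, ht, ht0⟩ := (h3.and self_mem_nhdsWithin).exists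
  have h4 := D.X_nonneg w i ht
  rw [sub_eq_add_neg, X_add, map_neg, map_smul, coord_self] at h4
  simp at h4
  have : (0:ℝ) < t := ht0
  linarith

/-- `y` is in the cone slice of height `N` at the vertex `w`. -/
def C (w : ι) (N : ℝ) (y : Fin n → ℝ) : Prop :=
  0 ≤ N ∧ ∃ z ∈ P, y = N • (z - D.p w)

lemma C_zero (w) : D.C w 0 0 := ⟨le_rfl, D.p w, D.p_mem w, by simp⟩

lemma C_one (w) {y : Fin n → ℝ} (h : D.p w + y ∈ P) : D.C w 1 y :=
  ⟨zero_le_one, _, h, by simp⟩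

lemma C_add {w N M y z} (h : D.C w N y) (h' : D.C w M z) : D.C w (N + M) (y + z) := by
  obtain ⟨hN, p, hp, rfl⟩ := h
  obtain ⟨hM, q, hq, rfl⟩ := h'
  refine ⟨by positivity, ?_⟩
  rcases (add_nonneg hN hM).eq_or_lt with h0 | h0
  · have h1 : N = 0 := by linarith
    have h2 : M = 0 := by linarith
    exact ⟨p, hp, by simp [h1, h2]⟩
  · refine ⟨(N / (N + M)) • p + (M / (N + M)) • q,
      D.conv hp hq (by positivity) (by positivity) (by field_simp), ?_⟩
    have e1 : (N + M) * (N / (N + M)) = N := by field_simp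
    have e2 : (N + M) * (M / (N + M)) = M := by field_simp
    rw [smul_sub (N + M), smul_add, smul_smul, smul_smul, e1, e2, smul_sub, smul_sub, add_smul]
    abel

lemma C_smul {w N y} {c : ℝ} (hc : 0 ≤ c) (h : D.C w N y) : D.C w (c * N) (c • y) := by
  obtain ⟨hN, p, hp, rfl⟩ := h
  exact ⟨by positivity, p, hp, by rw [smul_smul]⟩

lemma C_sum {w} {κ : Type*} (s : Finset κ) (N : κ → ℝ) (y : κ → Fin n → ℝ)
    (h : ∀ t ∈ s, D.C w (N t) (y t)) : D.C w (∑ t ∈ s, N t) (∑ t ∈ s, y t) := by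
  classical
  induction s using Finset.induction_on with
  | empty => simpa using D.C_zero w
  | insert a s ha ih =>
    rw [Finset.sum_insert ha, Finset.sum_insert ha]
    exact D.C_add (h a (Finset.mem_insert_self _ _)) (ih fun t ht => h t (Finset.mem_insert_of_mem ht))

lemma isLattice_add {x y : Fin n → ℝ} (hx : IsLatticePt x) (hy : IsLatticePt y) :
    IsLatticePt (x + y) := by
  intro i
  obtain ⟨a, ha⟩ := hx i
  obtain ⟨b, hb⟩ := hy i
  exact ⟨a + b, by simp [ha, hb]⟩

lemma isLattice_smul {x : Fin n → ℝ} (m : ℤ) (hx : IsLatticePt x) :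
    IsLatticePt ((m : ℝ) • x) := by
  intro i
  obtain ⟨a, ha⟩ := hx i
  exact ⟨m * a, by simp [ha]⟩

lemma isLattice_sum {κ : Type*} (s : Finset κ) (y : κ → Fin n → ℝ)
    (h : ∀ t ∈ s, IsLatticePt (y t)) : IsLatticePt (∑ t ∈ s, y t) := by
  classical
  induction s using Finset.induction_on with
  | empty => intro i; exact ⟨0, by simp⟩
  | insert a s ha ih =>
    rw [Finset.sum_insert ha]
    exact isLattice_add (h a (Finset.mem_insert_self _ _)) (ih fun t ht => h t (Finset.mem_insert_of_mem ht))

lemma hasInt [Finite ι] [Nonempty ι] (w : ι) (m : Fin n → ℤ) (hm : ∀ i, 1 ≤ m i) (N : ℝ) (k : ℕ)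
    (hk : N < k) (h : D.C w N (∑ i, (m i : ℝ) • D.E w i)) :
    0 < k ∧ HasInteriorLatticePt P k := by
  obtain ⟨hN, z, hz, hy⟩ := h
  have hk0 : (0:ℝ) < k := by linarith
  refine ⟨by exact_mod_cast hk0, (k : ℝ) • D.p w + ∑ i, (m i : ℝ) • D.E w i, ?_, ?_⟩
  · rw [interior_smul₀ hk0.ne', Set.mem_smul_set_iff_inv_smul_mem₀ hk0.ne']
    apply D.mem_interior
    have he : (k : ℝ)⁻¹ • ((k : ℝ) • D.p w + ∑ i, (m i : ℝ) • D.E w i) =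
        D.p w + (k : ℝ)⁻¹ • ∑ i, (m i : ℝ) • D.E w i := by
      rw [smul_add, smul_smul, inv_mul_cancel₀ hk0.ne', one_smul]
    rw [he]
    intro v i
    rcases (D.X_nonneg v i (D.p_mem w)).eq_or_lt with h0 | h0
    · obtain ⟨j, -, hj⟩ := D.facet_eq v i w h0.symm
      rw [hj, X_add, X_p_self, map_smul, map_sum]
      simp only [map_smul, coord_self, smul_eq_mul]
      simp
      have : (1:ℝ) ≤ m j := by exact_mod_cast hm j
      have hmj : (0:ℝ) < m j := by linarith
      positivity
    · rw [hy, X_add, map_smul, map_smul]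
      have h1 : D.X v i z = D.X v i (D.p w) + (D.E v).coord i (z - D.p w) := by
        rw [← X_add]; congr 1; abel
      have h2 := D.X_nonneg v i hz
      set c := (D.E v).coord i (z - D.p w)
      simp only [smul_eq_mul]
      set b := D.X v i (D.p w)
      have h3 : b + (k:ℝ)⁻¹ * (N * c) = (k:ℝ)⁻¹ * ((k - N) * b + N * (b + c)) := by
        field_simp; ring
      rw [h3]
      rw [h1] at h2
      have h4 : 0 < (k - N) * b := mul_pos (by linarith) h0
      have h5 : 0 ≤ N * (b + c) := mul_nonneg hN h2
      positivity
  · apply isLattice_add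
    · exact_mod_cast isLattice_smul (k : ℤ) (D.lat_p w)
    · exact isLattice_sum _ _ fun i _ => isLattice_smul _ (D.lat_E w i)

lemma codeg_le [Finite ι] [Nonempty ι] (w : ι) (m : Fin n → ℤ) (hm : ∀ i, 1 ≤ m i) (N : ℝ) (k : ℕ)
    (hk : N < k) (h : D.C w N (∑ i, (m i : ℝ) • D.E w i)) : codeg P ≤ k :=
  Nat.sInf_le (D.hasInt w m hm N k hk h)

lemma codeg_spec (D : SD P ι) [Finite ι] [Nonempty ι] : 0 < codeg P ∧ HasInteriorLatticePt P (codeg P) := by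
  obtain ⟨w⟩ := ‹Nonempty ι›
  have : Nonempty ι := ⟨w⟩
  have : (n + 1) ∈ {t : ℕ | 0 < t ∧ HasInteriorLatticePt P t} := by
    refine D.hasInt w (fun _ => 1) (fun _ => le_rfl) n (n + 1) (by push_cast; linarith) ?_
    have := D.C_sum (w := w) Finset.univ (fun _ => 1) (fun i => D.E w i)
      (fun i _ => D.C_one w (D.edge_mem1 w i))
    simpa using this
  exact Nat.sInf_mem ⟨_, this⟩

lemma adjoint_codeg [Finite ι] [Nonempty ι] :
    ∃ x, ∀ w i, ((codeg P : ℝ))⁻¹ ≤ D.X w i x := by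
  obtain ⟨h0, y, hy, hlat⟩ := D.codeg_spec
  set t := codeg P
  have ht : (0:ℝ) < t := by exact_mod_cast h0
  rw [interior_smul₀ ht.ne', Set.mem_smul_set_iff_inv_smul_mem₀ ht.ne'] at hy
  refine ⟨(t:ℝ)⁻¹ • y, fun w i => ?_⟩
  have h1 := D.interior_X hy w i
  have h2 : D.X w i ((t:ℝ)⁻¹ • y) = (t:ℝ)⁻¹ * ((D.E w).coord i y - t * (D.E w).coord i (D.p w)) := by
    unfold X; rw [map_sub, map_smul]; simp only [smul_eq_mul]; field_simp
  obtain ⟨a, ha⟩ := D.lat_coord w i _ hlat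
  obtain ⟨b, hb⟩ := D.lat_coord w i _ (D.lat_p w)
  rw [h2, ha, hb] at h1 ⊢
  have h3 := (mul_pos_iff_of_pos_left (inv_pos.2 ht)).1 h1
  have h4 : 0 < a - t * b := by exact_mod_cast h3
  have h5 : (1:ℝ) ≤ a - t * b := by exact_mod_cast h4
  have : 0 < (t:ℝ)⁻¹ := by positivity
  nlinarith

lemma perm_bound [Finite ι] [Nonempty ι] (w : ι) (π : Equiv.Perm (Fin n))
    (h : ∀ i, D.p w + D.E w i + D.E w (π i) ∈ P) : 2 * codeg P ≤ n + 2 := by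
  have h1 : codeg P ≤ (n + 2) / 2 := by
    refine D.codeg_le w (fun _ => 1) (fun _ => le_rfl) (n / 2 : ℝ) _ ?_ ?_
    · have : n < 2 * ((n + 2) / 2) := by omega
      have : (n : ℝ) < 2 * (((n + 2) / 2 : ℕ) : ℝ) := by exact_mod_cast this
      linarith
    · have := D.C_smul (c := 1/2) (by norm_num) (D.C_sum (w := w) Finset.univ (fun _ => 1)
        (fun i => D.E w i + D.E w (π i))
        (fun i _ => D.C_one w (by rw [← add_assoc]; exact h i)))
      rw [Finset.sum_add_distrib, Equiv.sum_comp π (fun i => D.E w i), ← two_smul ℝ, smul_smul] at this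
      have e : (1 / 2 : ℝ) * 2 = 1 := by norm_num
      rw [e] at this
      simp only [Finset.sum_const, Finset.card_univ, Fintype.card_fin, nsmul_eq_mul, mul_one] at this
      convert this using 1
      · ring
      · simp
  omega

end SD

namespace SD

variable {n : ℕ} {P : Set (Fin n → ℝ)} {ι : Type} (D : SD P ι)

lemma sum_pairs {κ : Type*} [Fintype κ] [DecidableEq κ] {A : Type*} [AddCommMonoid A]
    (S H : Finset κ) (f : κ → κ) (hf : ∀ h ∈ H, f h ∈ S) (hinj : Set.InjOn f H) (e : κ → A)
    (hd : Disjoint H S) :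
    ∑ h ∈ H, (e h + e (f h)) + ∑ i ∈ S \ H.image f, e i = ∑ i ∈ H ∪ S, e i := by
  rw [Finset.sum_add_distrib, ← Finset.sum_image (f := e) hinj, add_assoc,
    add_comm (∑ i ∈ H.image f, e i), Finset.sum_sdiff, Finset.sum_union hd]
  intro x hx
  obtain ⟨h, hh, rfl⟩ := Finset.mem_image.1 hx
  exact hf h hh

lemma exists_inj {κ : Type*} [DecidableEq κ] (H S : Finset κ) (hS : H.card ≤ S.card) :
    ∃ f : κ → κ, (∀ h ∈ H, f h ∈ S) ∧ Set.InjOn f H := by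
  obtain ⟨T, hT, hc⟩ := Finset.exists_subset_card_eq hS
  have e := Finset.equivOfCardEq hc.symm
  refine ⟨fun h => if hh : h ∈ H then (e ⟨h, hh⟩).1 else h, ?_, ?_⟩
  · intro h hh; simp only [hh, dif_pos]; exact hT (e ⟨h, hh⟩).2
  · intro x hx y hy hxy
    have hx' : x ∈ H := hx
    have hy' : y ∈ H := hy
    simp only [hx', hy', dif_pos] at hxy
    have := e.injective (Subtype.ext hxy)
    exact congrArg Subtype.val this

lemma class_bound [Finite ι] [Nonempty ι] (w : ι) (S : Finset (Fin n)) (hS : n < 2 * S.card)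
    (h : ∀ i ∈ S, ∀ j ∉ S, D.p w + D.E w j + D.E w i ∈ P) : codeg P ≤ S.card + 1 := by
  have hcard : Sᶜ.card + S.card = n := by
    rw [Finset.card_compl_add_card]; simp
  obtain ⟨f, hf, hinj⟩ := exists_inj Sᶜ S (by omega)
  have h1 := D.C_sum (w := w) Sᶜ (fun _ => 1) (fun j => D.E w j + D.E w (f j))
    (fun j hj => D.C_one w (by
      rw [← add_assoc]; exact h _ (hf j hj) j (Finset.mem_compl.1 hj)))
  have h2 := D.C_sum (w := w) (S \ Sᶜ.image f) (fun _ => 1) (fun j => D.E w j)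
    (fun j hj => D.C_one w (D.edge_mem1 w j))
  have h3 := D.C_add h1 h2
  rw [sum_pairs S Sᶜ f hf hinj _ disjoint_compl_left] at h3
  have hu : Sᶜ ∪ S = Finset.univ := by ext x; simp [em']
  have hi : (Sᶜ.image f).card = Sᶜ.card := Finset.card_image_of_injOn hinj
  have hsub : Sᶜ.image f ⊆ S := by
    intro x hx
    obtain ⟨h, hh, rfl⟩ := Finset.mem_image.1 hx
    exact hf h hh
  rw [hu] at h3
  simp only [Finset.sum_const, nsmul_eq_mul, mul_one] at h3
  refine D.codeg_le w (fun _ => 1) (fun _ => le_rfl) (Sᶜ.card + (S \ Sᶜ.image f).card) _ ?_ (by simpa only [Int.cast_one, one_smul] using h3)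
  have h4 := Finset.card_sdiff_add_card_eq_card hsub
  have h5 : (Sᶜ.card : ℝ) + ((S \ Sᶜ.image f).card : ℝ) = S.card := by
    rw [hi] at h4
    exact_mod_cast (by omega : Sᶜ.card + (S \ Sᶜ.image f).card = S.card)
  push_cast
  linarith

lemma birat_bound [Finite ι] [Nonempty ι] (w : ι) (S : Finset (Fin n)) (hS : n < 2 * S.card)
    (h : ∀ i ∈ S, ∀ j ∉ S, D.p w + D.E w j + D.E w i ∈ P) (j0 : Fin n) (hj0 : j0 ∉ S)
    (h2 : ∀ i ∈ S, D.p w + (2 : ℝ) • D.E w i + D.E w j0 ∈ P) : 2 * codeg P ≤ n + 2 := by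
  have hcard : Sᶜ.card + S.card = n := by
    rw [Finset.card_compl_add_card]; simp
  set H := Sᶜ.erase j0 with hH
  have hHc : H.card + 1 = Sᶜ.card := Finset.card_erase_add_one (Finset.mem_compl.2 hj0)
  obtain ⟨f, hf, hinj⟩ := exists_inj H S (by omega)
  set R := S \ H.image f with hR
  have hi : (H.image f).card = H.card := Finset.card_image_of_injOn hinj
  have hsub : H.image f ⊆ S := by
    intro x hx
    obtain ⟨h, hh, rfl⟩ := Finset.mem_image.1 hx
    exact hf h hh
  have h4 : R.card + (H.image f).card = S.card := Finset.card_sdiff_add_card_eq_card hsub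
  have h1 := D.C_sum (w := w) H (fun _ => 1) (fun j => D.E w j + D.E w (f j))
    (fun j hj => D.C_one w (by
      rw [← add_assoc]; exact h _ (hf j hj) j (Finset.mem_compl.1 (Finset.mem_of_mem_erase hj))))
  have h3 := D.C_sum (w := w) R (fun _ => 1/2 * 1) (fun i => (1/2 : ℝ) • ((2 : ℝ) • D.E w i + D.E w j0))
    (fun i hi => D.C_smul (by norm_num) (D.C_one w (by
      rw [← add_assoc]; exact h2 i (Finset.mem_sdiff.1 hi).1)))
  set M := (R.card + 1) / 2 with hM
  have hM1 : 1 ≤ M := by omega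
  have hMr : (R.card : ℝ) / 2 ≤ M := by
    have : R.card ≤ 2 * M := by omega
    have : (R.card : ℝ) ≤ 2 * M := by exact_mod_cast this
    linarith
  have hMr2 : (M : ℝ) ≤ (R.card + 1) / 2 := by
    have : 2 * M ≤ R.card + 1 := by omega
    have : 2 * (M:ℝ) ≤ R.card + 1 := by exact_mod_cast this
    linarith
  have h5 := D.C_smul (c := M - R.card / 2) (by linarith) (D.C_one w (D.edge_mem1 w j0))
  have h6 := D.C_add (D.C_add h1 h3) h5
  have hsum : ∑ x ∈ H, (D.E w x + D.E w (f x)) + ∑ i ∈ R, (1/2 : ℝ) • ((2 : ℝ) • D.E w i + D.E w j0)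
      + ((M : ℝ) - R.card / 2) • D.E w j0 =
      ∑ i, (((fun i => if i = j0 then (M : ℤ) else 1) i : ℤ) : ℝ) • D.E w i := by
    have e1 : ∑ i ∈ R, (1/2 : ℝ) • ((2 : ℝ) • D.E w i + D.E w j0) =
        ∑ i ∈ R, D.E w i + ((R.card : ℝ) / 2) • D.E w j0 := by
      simp only [smul_add, smul_smul, Finset.sum_add_distrib, Finset.sum_const]
      congr 1
      · norm_num
      · rw [← Nat.cast_smul_eq_nsmul ℝ, smul_smul]; congr 1; ring
    have hd : Disjoint H S := by
      rw [Finset.disjoint_left]; intro x hx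
      exact Finset.mem_compl.1 (Finset.mem_of_mem_erase hx)
    have hu : H ∪ S = Finset.univ.erase j0 := by
      ext x
      simp only [hH, Finset.mem_union, Finset.mem_erase, Finset.mem_compl, Finset.mem_univ]
      constructor
      · rintro (h | h)
        · exact ⟨h.1, trivial⟩
        · exact ⟨fun h' => hj0 (h' ▸ h), trivial⟩
      · intro h
        by_cases hx : x ∈ S
        · exact Or.inr hx
        · exact Or.inl ⟨h.1, hx⟩
    rw [e1, ← add_assoc, sum_pairs S H f hf hinj _ hd, hu, add_assoc, ← add_smul,
      ← Finset.sum_erase_add _ _ (Finset.mem_univ j0)]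
    congr 1
    · apply Finset.sum_congr rfl
      intro x hx
      simp [(Finset.mem_erase.1 hx).1]
    · simp
  rw [hsum] at h6
  have h7 : codeg P ≤ (n + 2) / 2 := by
    refine D.codeg_le w _ ?_ _ _ ?_ h6
    · intro i; split_ifs
      · exact_mod_cast hM1
      · exact le_rfl
    · have : n < 2 * ((n + 2) / 2) := by omega
      have : (n : ℝ) < 2 * (((n + 2) / 2 : ℕ) : ℝ) := by exact_mod_cast this
      have e2 : 2 * H.card + R.card + 1 = n := by omega
      have e3 : 2 * (H.card : ℝ) + R.card + 1 = n := by exact_mod_cast e2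
      simp only [Finset.sum_const, nsmul_eq_mul]
      linarith
  omega

lemma exists_class [Finite ι] [Nonempty ι] (w : ι) (hcd : n + 3 ≤ 2 * codeg P) :
    ∃ S : Finset (Fin n), n < 2 * S.card ∧ codeg P ≤ S.card + 1 ∧ (∀ i ∈ S, D.len w i = 1) ∧
      (∀ i ∈ S, ∀ j, D.a w i j = if j ∈ S then -1 else 0) := by
  classical
  let c : Fin n → ℕ := fun i => ((Quotient.out (Quotient.mk (D.rel w) i) : Fin n) : ℕ)
  have hc : ∀ i j, c i = c j ↔ (i = j ∨ D.adj w i j) := by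
    intro i j
    have : c i = c j ↔ Quotient.mk (D.rel w) i = Quotient.mk (D.rel w) j := by
      simp only [c]
      rw [Fin.val_inj]
      exact Quotient.out_inj
    rw [this, Quotient.eq]
    rfl
  have hbig : ∃ v, n < 2 * (Finset.univ.filter (fun i => c i = v)).card := by
    by_contra hcon
    push Not at hcon
    obtain ⟨π, hπ⟩ := exists_derange c hcon
    have := D.perm_bound w π (fun i => by
      by_contra h
      exact hπ i ((hc _ _).2 (Or.inr h)))
    omega
  obtain ⟨v, hv⟩ := hbig
  set S := Finset.univ.filter (fun i => c i = v) with hSdef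
  have hmem : ∀ i, i ∈ S ↔ c i = v := by intro i; simp [hSdef]
  have hin : ∀ i ∈ S, ∀ j ∈ S, i ≠ j → D.adj w i j := by
    intro i hi j hj hij
    have := (hc i j).1 (((hmem i).1 hi).trans ((hmem j).1 hj).symm)
    exact this.resolve_left hij
  have hout : ∀ i ∈ S, ∀ j ∉ S, ¬ D.adj w i j := by
    intro i hi j hj hadj
    exact hj ((hmem j).2 (((hc i j).2 (Or.inr hadj)).symm.trans ((hmem i).1 hi)))
  have hlen : ∀ i ∈ S, D.len w i = 1 := by
    intro i hi
    by_cases hex : ∃ j ∈ S, i ≠ j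
    · obtain ⟨j, hj, hij⟩ := hex
      exact D.adj_len1 hij (hin i hi j hj hij)
    · push Not at hex
      have hS1 : S.card ≤ 1 := Finset.card_le_one.2 (fun x hx y hy => (hex x hx).symm.trans (hex y hy))
      have hn1 : n ≤ 1 := by omega
      by_contra hne
      have h2 : 2 ≤ D.len w i := by have := D.len_pos w i; omega
      have := D.perm_bound w 1 (fun j => by
        have hji : j = i := Fin.ext (by have := j.isLt; have := i.isLt; omega)
        subst hji
        have := D.edge_mem w j 2 (by norm_num) (by exact_mod_cast h2)
        rw [two_smul, ← add_assoc] at this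
        exact this)
      omega
  have hP : ∀ i ∈ S, ∀ j ∉ S, D.p w + D.E w j + D.E w i ∈ P := by
    intro i hi j hj
    have := hout i hi j hj
    unfold adj at this
    rw [add_right_comm]
    exact not_not.1 this
  refine ⟨S, hv, D.class_bound w S hv hP, hlen, ?_⟩
  have hsame : ∀ i ∈ S, ∀ i' ∈ S, ∀ j, D.a w i j = D.a w i' j := by
    intro i hi i' hi' j
    by_cases h : i = i'
    · rw [h]
    · exact D.adj_U h (hin i hi i' hi' h) j
  intro i hi j
  split_ifs with hj
  · rw [hsame i hi j hj, a_self]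
  · have hij : i ≠ j := fun h => hj (h ▸ hi)
    have h1 := D.a_ge w hij
    rw [hlen i hi] at h1
    have h2 : D.a w i j ≠ -1 := fun h => hout i hi j hj (D.adj_of_a (hlen i hi) h)
    obtain ⟨m, hm⟩ := D.a_int w i j
    rw [hm] at h1 h2
    have h1' : (-1 : ℤ) ≤ m := by exact_mod_cast h1
    have h2' : m ≠ -1 := by intro h; apply h2; rw [h]; simp
    by_contra hne
    have h3 : m ≠ 0 := by intro h; apply hne; rw [hm, h]; simp
    have h4 : (1 : ℤ) ≤ m := by omega
    have h5 : (1 : ℝ) ≤ D.a w i j := by rw [hm]; exact_mod_cast h4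
    have := D.birat_bound w S hv hP j hj (fun i' hi' => by
      have h6 : (1:ℝ) ≤ D.a w i' j := by rw [← hsame i hi i' hi' j]; exact h5
      apply D.mem_of_ge w (by norm_num) (show i' ≠ j from fun h => hj (h ▸ hi'))
      rw [hlen i' hi']
      push_cast; linarith)
    omega

lemma fiber_bound (w : ι) (S : Finset (Fin n)) (i : Fin n) (hl : D.len w i = 1)
    (ha : ∀ j, D.a w i j = if j ∈ S then -1 else 0) (x : Fin n → ℝ) (s : ℝ)
    (hx : ∀ w i, s ≤ D.X w i x) : s * (S.card + 1) ≤ 1 := by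
  have h1 : s ≤ D.U w i x := hx _ _
  rw [U_eq, hl] at h1
  simp only [ha] at h1
  have h2 : ∑ j, D.X w j x * (if j ∈ S then (-1:ℝ) else 0) = - ∑ j ∈ S, D.X w j x := by
    simp only [mul_ite, mul_neg, mul_one, mul_zero]
    rw [Finset.sum_ite_mem, Finset.univ_inter, Finset.sum_neg_distrib]
  rw [h2] at h1
  have h3 : S.card • s ≤ ∑ j ∈ S, D.X w j x := Finset.card_nsmul_le_sum _ _ _ (fun j _ => hx w j)
  rw [nsmul_eq_mul] at h3
  push_cast at h1
  linarith

/-- all data about the codegree -/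
lemma class_full [Finite ι] [Nonempty ι] (w : ι) (hcd : n + 3 ≤ 2 * codeg P) :
    ∃ S : Finset (Fin n), S.card + 1 = codeg P ∧ (∀ i ∈ S, D.len w i = 1) ∧
      (∀ i ∈ S, ∀ j, D.a w i j = if j ∈ S then -1 else 0) := by
  obtain ⟨S, h1, h2, h3, h4⟩ := D.exists_class w hcd
  refine ⟨S, ?_, h3, h4⟩
  obtain ⟨x, hx⟩ := D.adjoint_codeg
  have hne : S.Nonempty := by
    rw [← Finset.card_pos]; omega
  obtain ⟨i, hi⟩ := hne
  have h5 := D.fiber_bound w S i (h3 i hi) (h4 i hi) x _ hx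
  have hpos : (0:ℝ) < codeg P := by exact_mod_cast D.codeg_spec.1
  rw [inv_mul_le_iff₀ hpos, mul_one] at h5
  have h6 : S.card + 1 ≤ codeg P := by exact_mod_cast h5
  omega

lemma hat_mem [Finite ι] (s : ℝ) (hs : ∀ w i, 0 ≤ D.lam w i s) (v : ι) (k : Fin n) (w : ι) :
    s ≤ D.X v k (D.hat w s) := by
  revert w
  by_contra hcon
  push Not at hcon
  -- choose a bad w with minimal X v k (p w)
  obtain ⟨w0, hw0⟩ := hcon
  have : Nonempty {w // D.X v k (D.hat w s) < s} := ⟨⟨w0, hw0⟩⟩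
  obtain ⟨⟨w, hw⟩, hmin⟩ := Finite.exists_min (fun w : {w // D.X v k (D.hat w s) < s} => D.X v k (D.p w.1))
  rcases (D.X_nonneg v k (D.p_mem w)).eq_or_lt with h0 | h0
  · obtain ⟨i, -, hi⟩ := D.facet_eq v k w h0.symm
    rw [hi, X_hat] at hw
    exact lt_irrefl _ hw
  · have hex : ∃ i, (D.E v).coord k (D.E w i) < 0 := by
      by_contra hno
      push Not at hno
      have h1 := D.X_p_self v k
      rw [D.eq_sum_X w (D.p v), X_add, map_sum] at h1
      have : 0 ≤ ∑ i, (D.E v).coord k (D.X w i (D.p v) • D.E w i) := by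
        apply Finset.sum_nonneg
        intro i _
        rw [map_smul]
        exact mul_nonneg (D.X_nonneg w i (D.p_mem v)) (hno i)
      linarith
    obtain ⟨i, hi⟩ := hex
    have hbad : D.X v k (D.hat (D.nb w i) s) < s := by
      rw [hat_nb, X_add, map_smul, smul_eq_mul]
      have := mul_nonpos_of_nonneg_of_nonpos (hs w i) hi.le
      linarith
    have h2 := hmin ⟨D.nb w i, hbad⟩
    simp only at h2
    rw [D.p_nb, X_add, map_smul, smul_eq_mul] at h2
    have hl : (0:ℝ) < D.len w i := by exact_mod_cast D.len_pos w i
    have := mul_neg_of_pos_of_neg hl hi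
    linarith

lemma kap_le [Finite ι] [Nonempty ι] (hcd : n + 3 ≤ 2 * codeg P) (w0 : ι) (i0 : Fin n) :
    D.kap w0 i0 ≤ codeg P * D.len w0 i0 := by
  by_contra hcon
  push Not at hcon
  have hlp : ∀ w i, (0:ℝ) < D.len w i := fun w i => by exact_mod_cast D.len_pos w i
  have : Nonempty (ι × Fin n) := ⟨(w0, i0)⟩
  obtain ⟨⟨w1, i1⟩, hmax⟩ := Finite.exists_max (fun q : ι × Fin n => D.kap q.1 q.2 / D.len q.1 q.2)
  set τ := D.kap w1 i1 / D.len w1 i1 with hτ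
  have hpos : (0:ℝ) < codeg P := by exact_mod_cast D.codeg_spec.1
  have hτcd : (codeg P : ℝ) < τ := by
    refine lt_of_lt_of_le ?_ (hmax (w0, i0))
    simp only
    rw [lt_div_iff₀ (hlp _ _)]; exact hcon
  have hτ0 : 0 < τ := by linarith
  have : Nonempty {q : ι × Fin n // D.kap q.1 q.2 / D.len q.1 q.2 = τ} := ⟨⟨(w1, i1), rfl⟩⟩
  obtain ⟨⟨⟨w, i⟩, hq⟩, hmin⟩ := Finite.exists_min
    (fun q : {q : ι × Fin n // D.kap q.1 q.2 / D.len q.1 q.2 = τ} => D.len q.1.1 q.1.2)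
  simp only at hq hmin
  have hlam : ∀ w i, D.lam w i τ⁻¹ = D.len w i * (1 - (D.kap w i / D.len w i) / τ) := by
    intro w i
    have := (hlp w i).ne'
    unfold lam; field_simp
  have hs : ∀ w i, 0 ≤ D.lam w i τ⁻¹ := by
    intro w i
    rw [hlam]
    apply mul_nonneg (hlp w i).le
    have := hmax (w, i)
    simp only at this
    have := (div_le_one hτ0).2 this
    linarith
  have hzero : D.lam w i τ⁻¹ = 0 := by
    rw [hlam, hq, div_self hτ0.ne']; simp
  have hhat : D.hat (D.nb w i) τ⁻¹ = D.hat w τ⁻¹ := by rw [hat_nb, hzero]; simp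
  have hU : D.U w i (D.hat w τ⁻¹) = τ⁻¹ := by rw [← hhat]; exact D.X_hat _ _ _
  -- all a ≥ -1
  have ha : ∀ j, -1 ≤ D.a w i j := by
    intro j
    by_contra hlt
    push Not at hlt
    obtain ⟨m, hm⟩ := D.a_int w i j
    have hm2 : m ≤ -2 := by
      rw [hm] at hlt
      have : m < -1 := by exact_mod_cast hlt
      omega
    have ham : D.a w i j ≤ -2 := by rw [hm]; exact_mod_cast hm2
    have h1 : τ⁻¹ ≤ D.U w i (D.hat (D.nb w j) τ⁻¹) := D.hat_mem _ hs _ _ _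
    rw [hat_nb, U_add_E, hU] at h1
    have h2 : D.lam w j τ⁻¹ = 0 := by
      have := hs w j
      nlinarith
    rw [hlam] at h2
    have h3 : D.kap w j / D.len w j = τ := by
      rcases mul_eq_zero.1 h2 with h | h
      · exact absurd h (hlp w j).ne'
      · have : D.kap w j / D.len w j / τ = 1 := by linarith
        rwa [div_eq_one_iff_eq hτ0.ne'] at this
    have h4 := hmin ⟨(w, j), h3⟩
    simp only at h4
    have h5 := D.U_nonneg w i (D.p_mem (D.nb w j))
    rw [D.p_nb, U_add_E, U_p] at h5
    have h4' : (D.len w i : ℝ) ≤ D.len w j := by exact_mod_cast h4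
    have := hlp w j
    nlinarith
  have hkap : D.kap w i = τ * D.len w i := by
    rw [← hq]; have := (hlp w i).ne'; field_simp
  have hsum : -(n:ℝ) ≤ ∑ j, D.a w i j := by
    have := Finset.card_nsmul_le_sum Finset.univ (fun j => D.a w i j) (-1) (fun j _ => ha j)
    simpa using this
  have hcdR : (n:ℝ) + 3 ≤ 2 * codeg P := by exact_mod_cast hcd
  have hl1 : D.len w i = 1 := by
    by_contra hne
    have h2 : 2 ≤ D.len w i := by have := D.len_pos w i; omega
    have h2' : (2:ℝ) ≤ D.len w i := by exact_mod_cast h2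
    have : τ * 2 ≤ D.kap w i := by rw [hkap]; exact mul_le_mul_of_nonneg_left h2' hτ0.le
    unfold kap at this
    linarith
  rw [hl1] at hkap
  obtain ⟨S, hS1, hS2, hS3⟩ := D.class_full w hcd
  have hS1R : (S.card : ℝ) + 1 = codeg P := by exact_mod_cast hS1
  have hbound : - ((Finset.univ.filter (fun j => D.a w i j = -1)).card : ℝ) ≤ ∑ j, D.a w i j := by
    classical
    have : ∑ j, (if D.a w i j = -1 then (-1:ℝ) else 0) ≤ ∑ j, D.a w i j := by
      apply Finset.sum_le_sum
      intro j _
      split_ifs with h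
      · exact h.ge
      · obtain ⟨m, hm⟩ := D.a_int w i j
        have h1 := ha j
        rw [hm] at h1 h ⊢
        have h1' : (-1:ℤ) ≤ m := by exact_mod_cast h1
        have h2' : m ≠ -1 := by intro h'; apply h; rw [h']; simp
        have : 0 ≤ m := by omega
        exact_mod_cast this
    refine le_trans (le_of_eq ?_) this
    rw [← Finset.sum_filter]; simp
  have hk2 : D.kap w i ≤ 1 + ((Finset.univ.filter (fun j => D.a w i j = -1)).card : ℝ) := by
    unfold kap; linarith
  by_cases hi : i ∈ S
  · have : (Finset.univ.filter (fun j => D.a w i j = -1)) = S := by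
      ext j; simp only [Finset.mem_filter, Finset.mem_univ, true_and]; rw [hS3 i hi j]
      split_ifs with h <;> simp [h]
    rw [this] at hk2
    push_cast at hkap
    linarith
  · have hsub : (Finset.univ.filter (fun j => D.a w i j = -1)) ⊆ Sᶜ := by
      intro j hj
      simp only [Finset.mem_filter, Finset.mem_univ, true_and] at hj
      rw [Finset.mem_compl]
      intro hjS
      have hne : j ≠ i := fun h => hi (h ▸ hjS)
      have h1 := D.adj_a hne (D.adj_symm (D.adj_of_a hl1 hj))
      rw [hS3 j hjS i] at h1
      simp [hi] at h1
    have h1 := Finset.card_le_card hsub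
    have hcard : Sᶜ.card + S.card = n := by
      rw [Finset.card_compl_add_card]; simp
    have h2 : (Finset.univ.filter (fun j => D.a w i j = -1)).card + codeg P ≤ n + 1 := by omega
    have h2' : ((Finset.univ.filter (fun j => D.a w i j = -1)).card : ℝ) + codeg P ≤ n + 1 := by exact_mod_cast h2
    push_cast at hkap
    linarith

end SD

namespace SD

variable {n : ℕ} {P : Set (Fin n → ℝ)} {ι : Type} (D : SD P ι)

def iprodL {n : ℕ} (a : Fin n → ℤ) : (Fin n → ℝ) →ₗ[ℝ] ℝ :=
  ∑ i, (a i : ℝ) • LinearMap.proj i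

lemma iprodL_apply {n : ℕ} (a : Fin n → ℤ) (x : Fin n → ℝ) : iprodL a x = iprod a x := by
  simp [iprodL, iprod, LinearMap.sum_apply]

lemma iprodL_single {n : ℕ} (a : Fin n → ℤ) (j : Fin n) : iprodL a (Pi.single j 1) = a j := by
  rw [iprodL_apply, iprod]
  rw [Finset.sum_eq_single j]
  · simp
  · intro b _ hb; simp [hb]
  · simp

lemma single_lat (j : Fin n) : IsLatticePt (Pi.single j (1:ℝ) : Fin n → ℝ) := by
  intro i
  by_cases h : i = j
  · subst h; exact ⟨1, by simp⟩
  · exact ⟨0, by simp [h]⟩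

lemma exists_cvec (w i) : ∃ a : Fin n → ℤ, ∀ x, iprod a x = (D.E w).coord i x := by
  choose m hm using fun j => D.lat_coord w i _ (single_lat j)
  refine ⟨m, fun x => ?_⟩
  rw [← iprodL_apply]
  have : iprodL m = (D.E w).coord i := by
    apply LinearMap.pi_ext'
    intro j
    apply LinearMap.ext_ring
    simp only [LinearMap.comp_apply, LinearMap.coe_single]
    rw [iprodL_single, hm]
  rw [this]

lemma iprod_int {n : ℕ} (a : Fin n → ℤ) {x : Fin n → ℝ} (hx : IsLatticePt x) :
    ∃ d : ℤ, iprod a x = d := by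
  choose m hm using hx
  exact ⟨∑ i, a i * m i, by simp [iprod, hm]⟩

lemma coord_ne (w i) : (D.E w).coord i ≠ 0 := by
  intro h
  have := D.coord_self w i i
  rw [h] at this; simp at this

lemma finrank_ker (w i) : Module.finrank ℝ (LinearMap.ker ((D.E w).coord i)) = n - 1 := by
  have := Module.Dual.finrank_ker_add_one_of_ne_zero (D.coord_ne w i)
  simp at this
  omega

lemma vspan_le (F : Set (Fin n → ℝ)) (f : (Fin n → ℝ) →ₗ[ℝ] ℝ) (c : ℝ) (h : ∀ x ∈ F, f x = c) :
    vectorSpan ℝ F ≤ LinearMap.ker f := by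
  rw [vectorSpan_def, Submodule.span_le]
  rintro _ ⟨x, hx, y, hy, rfl⟩
  simp [h x hx, h y hy]

lemma facet_of (w i) : ∃ a b, IsFacetIneq P a b ∧ ∀ x, iprod a x - b = D.X w i x := by
  obtain ⟨a, ha⟩ := D.exists_cvec w i
  have hX : ∀ x, iprod a x - (D.E w).coord i (D.p w) = D.X w i x := by
    intro x; rw [ha, X, map_sub]
  refine ⟨a, (D.E w).coord i (D.p w), ⟨⟨?_, ?_⟩, ?_, ⟨D.p w, D.p_mem w, ha _⟩, ?_⟩, hX⟩
  · rintro rfl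
    have := ha (D.E w i)
    rw [coord_self] at this
    simp [iprod] at this
  · intro d hd
    have h1 := ha (D.E w i)
    rw [coord_self, if_pos rfl] at h1
    choose m hm using D.lat_E w i
    have h2 : ∑ j, a j * m j = 1 := by
      have : ((∑ j, a j * m j : ℤ) : ℝ) = 1 := by
        rw [← h1, iprod]; push_cast; simp [hm]
      exact_mod_cast this
    apply isUnit_of_dvd_one
    rw [← h2]
    exact Finset.dvd_sum fun j _ => Dvd.dvd.mul_right (hd j) _
  · intro x hx
    have := D.X_nonneg w i hx
    rw [← hX] at this; linarith
  · rw [← D.finrank_ker w i]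
    suffices h : vectorSpan ℝ {x ∈ P | iprod a x = (D.E w).coord i (D.p w)} =
        LinearMap.ker ((D.E w).coord i) by rw [h]
    apply le_antisymm
    · exact vspan_le _ _ ((D.E w).coord i (D.p w)) (fun x hx => by rw [← ha]; exact hx.2)
    · intro x hx
      rw [LinearMap.mem_ker] at hx
      rw [← D.sum_coord w x]
      apply Submodule.sum_mem
      intro j _
      by_cases hj : j = i
      · subst hj; rw [hx, zero_smul]; exact Submodule.zero_mem _
      · apply Submodule.smul_mem
        have h1 : D.p w + D.E w j ∈ {x ∈ P | iprod a x = (D.E w).coord i (D.p w)} := by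
          refine ⟨D.edge_mem1 w j, ?_⟩
          rw [ha, map_add, coord_self, if_neg (fun h => hj h.symm), add_zero]
        have h2 : D.p w ∈ {x ∈ P | iprod a x = (D.E w).coord i (D.p w)} := ⟨D.p_mem w, ha _⟩
        have := vsub_mem_vectorSpan ℝ h1 h2
        simpa using this

lemma exists_min_vertex [Finite ι] [Nonempty ι] (f : (Fin n → ℝ) →ₗ[ℝ] ℝ) :
    ∃ w, ∀ y ∈ P, f (D.p w) ≤ f y := by
  obtain ⟨w, hw⟩ := Finite.exists_min (fun w => f (D.p w))
  refine ⟨w, ?_⟩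
  have hsub : convexHull ℝ (Set.range D.p) ⊆ {y | f (D.p w) ≤ f y} := by
    apply convexHull_min
    · rintro _ ⟨v, rfl⟩; exact hw v
    · exact convex_halfSpace_ge f.isLinear _
  exact fun y hy => (D.hull.subset.trans hsub) hy

lemma of_facet [Finite ι] [Nonempty ι] {a : Fin n → ℤ} {b : ℝ} (h : IsFacetIneq P a b) :
    ∃ w i, ∀ x, iprod a x - b = D.X w i x := by
  obtain ⟨⟨ha0, haprim⟩, hmin, ⟨x0, hx0, hx0b⟩, hrank⟩ := h
  obtain ⟨w, hw⟩ := D.exists_min_vertex (iprodL a)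
  simp only [iprodL_apply] at hw
  have hwb : iprod a (D.p w) = b := le_antisymm (hx0b ▸ hw x0 hx0) (hmin _ (D.p_mem w))
  have hnn : ∀ i, 0 ≤ iprodL a (D.E w i) := by
    intro i
    have := hw _ (D.edge_mem1 w i)
    rw [← iprodL_apply, ← iprodL_apply, map_add] at this
    linarith
  have hf : ∀ y, iprodL a y = ∑ k, (D.E w).coord k y * iprodL a (D.E w k) := by
    intro y
    conv_lhs => rw [← D.sum_coord w y]
    rw [map_sum]
    simp only [map_smul, smul_eq_mul]
  have hne : ∃ i, iprodL a (D.E w i) ≠ 0 := by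
    by_contra hcon
    push Not at hcon
    apply ha0
    funext j
    have h1 := hf (Pi.single j 1)
    rw [iprodL_single] at h1
    simp [hcon] at h1
    simpa using h1
  have hker : ∀ i, iprodL a (D.E w i) ≠ 0 →
      vectorSpan ℝ {x ∈ P | iprod a x = b} = LinearMap.ker ((D.E w).coord i) := by
    intro i hi
    apply Submodule.eq_of_le_of_finrank_eq
    · apply vspan_le _ _ ((D.E w).coord i (D.p w))
      rintro x ⟨hx, hxb⟩
      have h1 := hf (x - D.p w)
      rw [map_sub, iprodL_apply, iprodL_apply, hxb, hwb, sub_self] at h1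
      have h2 := (Finset.sum_eq_zero_iff_of_nonneg (fun k _ => mul_nonneg (D.pos w x hx k) (hnn k))).1
        h1.symm i (Finset.mem_univ _)
      rcases mul_eq_zero.1 h2 with h3 | h3
      · rw [map_sub] at h3; linarith
      · exact absurd h3 hi
    · rw [hrank, D.finrank_ker]
  obtain ⟨i, hi⟩ := hne
  have hz : ∀ j, j ≠ i → iprodL a (D.E w j) = 0 := by
    intro j hj
    by_contra hcon
    have h1 := (hker i hi).symm.trans (hker j hcon)
    have h2 : D.E w j ∈ LinearMap.ker ((D.E w).coord i) := by
      rw [LinearMap.mem_ker, coord_self, if_neg (fun h => hj h.symm)]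
    rw [h1, LinearMap.mem_ker, coord_self, if_pos rfl] at h2
    exact one_ne_zero h2
  have hf2 : ∀ y, iprodL a y = (D.E w).coord i y * iprodL a (D.E w i) := by
    intro y
    rw [hf, Finset.sum_eq_single i]
    · intro k _ hk; rw [hz k hk, mul_zero]
    · simp
  obtain ⟨d, hd⟩ := iprod_int a (D.lat_E w i)
  rw [← iprodL_apply] at hd
  have hdu : IsUnit d := by
    apply haprim
    intro j
    obtain ⟨m, hm⟩ := D.lat_coord w i _ (single_lat j)
    have h1 := hf2 (Pi.single j 1)
    rw [iprodL_single, hm, hd] at h1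
    have h2 : a j = m * d := by exact_mod_cast h1
    exact ⟨m, by rw [h2]; ring⟩
  have hd1 : d = 1 := by
    have h0 := hnn i
    rw [hd] at h0
    have h0' : 0 ≤ d := by exact_mod_cast h0
    rcases Int.isUnit_iff.1 hdu with h | h
    · exact h
    · omega
  refine ⟨w, i, fun x => ?_⟩
  rw [X, ← hwb, ← iprodL_apply, ← iprodL_apply, ← map_sub, hf2, hd, hd1]
  simp

lemma mem_adjoint [Finite ι] [Nonempty ι] (s : ℝ) (x : Fin n → ℝ) :
    x ∈ adjointPoly P s ↔ ∀ w i, s ≤ D.X w i x := by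
  constructor
  · intro h w i
    obtain ⟨a, b, hab, hx⟩ := D.facet_of w i
    have := h a b hab
    rw [← hx]; linarith
  · intro h a b hab
    obtain ⟨w, i, hx⟩ := D.of_facet hab
    have := h w i
    rw [← hx] at this; linarith

def Q (s : ℝ) : Set (Fin n → ℝ) := {x | ∀ w i, s ≤ D.X w i x}

def V (g : (Fin n → ℝ) →ₗ[ℝ] ℝ) (w : ι) : Prop := ∀ i, 0 ≤ g (D.E w i)

lemma g_eq (g : (Fin n → ℝ) →ₗ[ℝ] ℝ) (w) (s : ℝ) (x) :
    g x = g (D.hat w s) + ∑ i, (D.X w i x - s) * g (D.E w i) := by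
  conv_lhs => rw [D.eq_sum_X w x]
  simp only [hat, map_add, map_sum, map_smul, smul_eq_mul, sub_mul, Finset.sum_sub_distrib,
    Finset.mul_sum]
  ring

lemma hat_memQ [Finite ι] {s : ℝ} (hs : ∀ w i, 0 < D.lam w i s) (w) : D.hat w s ∈ D.Q s :=
  fun v k => D.hat_mem s (fun w i => (hs w i).le) v k w

lemma V_iff [Finite ι] {s : ℝ} (hs : ∀ w i, 0 < D.lam w i s) (g : (Fin n → ℝ) →ₗ[ℝ] ℝ) (w) :
    D.V g w ↔ ∀ y ∈ D.Q s, g (D.hat w s) ≤ g y := by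
  constructor
  · intro h y hy
    rw [D.g_eq g w s y]
    have : 0 ≤ ∑ i, (D.X w i y - s) * g (D.E w i) :=
      Finset.sum_nonneg fun i _ => mul_nonneg (sub_nonneg.2 (hy w i)) (h i)
    linarith
  · intro h i
    have h1 := h _ (D.hat_memQ hs (D.nb w i))
    rw [hat_nb, map_add, map_smul, smul_eq_mul] at h1
    have := hs w i
    by_contra hcon
    push Not at hcon
    nlinarith

lemma face_iff [Finite ι] {s : ℝ} (hs : ∀ w i, 0 < D.lam w i s) {g : (Fin n → ℝ) →ₗ[ℝ] ℝ} {w}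
    (hw : D.V g w) {x} (hx : x ∈ D.Q s) :
    (∀ y ∈ D.Q s, g x ≤ g y) ↔ ∀ i, 0 < g (D.E w i) → D.X w i x = s := by
  have hnn : ∀ i ∈ Finset.univ, 0 ≤ (D.X w i x - s) * g (D.E w i) :=
    fun i _ => mul_nonneg (sub_nonneg.2 (hx w i)) (hw i)
  constructor
  · intro h i hi
    have h1 := h _ (D.hat_memQ hs w)
    rw [D.g_eq g w s x] at h1
    have h2 := Finset.sum_nonneg hnn
    have h3 := (Finset.sum_eq_zero_iff_of_nonneg hnn).1 (by linarith) i (Finset.mem_univ _)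
    rcases mul_eq_zero.1 h3 with h | h
    · linarith
    · exact absurd h hi.ne'
  · intro h y hy
    refine le_trans (le_of_eq ?_) ((D.V_iff hs g w).1 hw y hy)
    rw [D.g_eq g w s x, Finset.sum_eq_zero, add_zero]
    intro i _
    rcases (hw i).eq_or_lt with h0 | h0
    · rw [← h0, mul_zero]
    · rw [h i h0, sub_self, zero_mul]

lemma pos_iff [Finite ι] {s : ℝ} (hs : ∀ w i, 0 < D.lam w i s) {g : (Fin n → ℝ) →ₗ[ℝ] ℝ} {w}
    (hw : D.V g w) (i) : 0 < g (D.E w i) ↔ ¬ D.V g (D.nb w i) := by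
  constructor
  · intro h hV
    have := hV (D.bk w i)
    rw [D.E_bk, map_neg] at this
    linarith
  · intro h
    by_contra hcon
    have h0 : g (D.E w i) = 0 := le_antisymm (not_lt.1 hcon) (hw i)
    apply h
    rw [D.V_iff hs] at hw ⊢
    rw [hat_nb, map_add, map_smul, h0]
    simpa using hw

lemma V_nonempty [Finite ι] [Nonempty ι] {s : ℝ} (hs : ∀ w i, 0 < D.lam w i s)
    (g : (Fin n → ℝ) →ₗ[ℝ] ℝ) : ∃ w, D.V g w := by
  obtain ⟨w, hw⟩ := Finite.exists_min (fun w => g (D.hat w s))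
  refine ⟨w, fun i => ?_⟩
  have h1 := hw (D.nb w i)
  rw [hat_nb, map_add, map_smul, smul_eq_mul] at h1
  have := hs w i
  by_contra hcon
  push Not at hcon
  nlinarith

lemma faces_eq_iff [Finite ι] [Nonempty ι] {s : ℝ} (hs : ∀ w i, 0 < D.lam w i s)
    (g h : (Fin n → ℝ) →ₗ[ℝ] ℝ) :
    {x ∈ D.Q s | ∀ y ∈ D.Q s, g x ≤ g y} = {x ∈ D.Q s | ∀ y ∈ D.Q s, h x ≤ h y} ↔
      ∀ w, D.V g w ↔ D.V h w := by
  constructor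
  · intro heq w
    rw [D.V_iff hs, D.V_iff hs]
    have := Set.ext_iff.1 heq (D.hat w s)
    simp only [Set.mem_ofPred_eq, D.hat_memQ hs w, true_and] at this
    exact this
  · intro hV
    ext x
    simp only [Set.mem_ofPred_eq]
    apply and_congr_right
    intro hx
    obtain ⟨w, hw⟩ := D.V_nonempty hs g
    have hw' := (hV w).1 hw
    rw [D.face_iff hs hw hx, D.face_iff hs hw' hx]
    apply forall_congr'
    intro i
    rw [D.pos_iff hs hw, D.pos_iff hs hw', hV]

lemma normEquiv [Finite ι] [Nonempty ι] {s : ℝ} (hs : ∀ w i, 0 < D.lam w i s) :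
    NormEquiv (adjointPoly P s) P := by
  have h0 : ∀ w i, 0 < D.lam w i 0 := by
    intro w i
    have : (0:ℝ) < D.len w i := by exact_mod_cast D.len_pos w i
    simpa [lam] using this
  have hQ : adjointPoly P s = D.Q s := Set.ext fun x => D.mem_adjoint s x
  have hP : P = D.Q 0 := Set.ext fun x => ⟨fun hx w i => D.X_nonneg w i hx, fun hx => D.mem_of_X hx⟩
  intro g h
  rw [hQ]
  have h1 := D.faces_eq_iff h0 g h
  rw [← hP] at h1
  rw [D.faces_eq_iff hs, h1]

lemma tau_sub_mu (D : SD P ι) [Finite ι] [Nonempty ι] (hn : 0 < n) : tauSet P ⊆ muSet P := by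
  rintro s ⟨hs, hN⟩
  refine ⟨hs, ?_⟩
  by_contra hcon
  rw [Set.not_nonempty_iff_eq_empty] at hcon
  obtain ⟨w⟩ := ‹Nonempty ι›
  let i : Fin n := ⟨0, hn⟩
  have h1 := (hN ((D.E w).coord i) 0).1 (by rw [hcon]; simp)
  have h2 : D.p w + D.E w i ∈ {x ∈ P | ∀ y ∈ P, (0 : (Fin n → ℝ) →ₗ[ℝ] ℝ) x ≤ (0 : (Fin n → ℝ) →ₗ[ℝ] ℝ) y} :=
    ⟨D.edge_mem1 w i, by simp⟩
  rw [← h1] at h2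
  have h3 := h2.2 _ (D.p_mem w)
  rw [map_add, coord_self, if_pos rfl] at h3
  linarith

theorem main (D : SD P ι) [Finite ι] [Nonempty ι] (hcd : n + 3 ≤ 2 * codeg P) :
    sSup (muSet P) = (codeg P : ℝ)⁻¹ ∧ sSup (tauSet P) = (codeg P : ℝ)⁻¹ := by
  have hpos : (0:ℝ) < codeg P := by exact_mod_cast D.codeg_spec.1
  obtain ⟨w⟩ := id ‹Nonempty ι›
  obtain ⟨S, hS1, hS2, hS3⟩ := D.class_full w hcd
  have hSne : S.Nonempty := by rw [← Finset.card_pos]; omega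
  obtain ⟨i, hi⟩ := hSne
  have hn : 0 < n := i.pos
  have hmem : (codeg P : ℝ)⁻¹ ∈ muSet P := by
    obtain ⟨x, hx⟩ := D.adjoint_codeg
    exact ⟨by positivity, x, (D.mem_adjoint _ _).2 hx⟩
  have hub : ∀ s ∈ muSet P, s ≤ (codeg P : ℝ)⁻¹ := by
    rintro s ⟨hs, x, hx⟩
    have := D.fiber_bound w S i (hS2 i hi) (hS3 i hi) x s ((D.mem_adjoint _ _).1 hx)
    have hS1R : (S.card : ℝ) + 1 = codeg P := by exact_mod_cast hS1
    rw [hS1R] at this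
    rwa [← one_div, le_div_iff₀ hpos]
  have htau : Set.Ioo 0 (codeg P : ℝ)⁻¹ ⊆ tauSet P := by
    rintro s ⟨h0, h1⟩
    refine ⟨h0, D.normEquiv fun w i => ?_⟩
    have hl : (0:ℝ) < D.len w i := by exact_mod_cast D.len_pos w i
    have hk := D.kap_le hcd w i
    rw [← one_div, lt_div_iff₀ hpos] at h1
    unfold lam
    nlinarith [mul_le_mul_of_nonneg_left hk h0.le, mul_lt_mul_of_pos_right h1 hl]
  constructor
  · exact le_antisymm (csSup_le ⟨_, hmem⟩ hub) (le_csSup ⟨_, hub⟩ hmem)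
  · have hub2 : ∀ s ∈ tauSet P, s ≤ (codeg P : ℝ)⁻¹ := fun s hs => hub s (D.tau_sub_mu hn hs)
    have hip : (0:ℝ) < (codeg P : ℝ)⁻¹ := by positivity
    apply le_antisymm
    · exact csSup_le ((Set.nonempty_Ioo.2 hip).mono htau) hub2
    · rw [← csSup_Ioo hip]
      exact csSup_le_csSup ⟨_, hub2⟩ (Set.nonempty_Ioo.2 hip) htau

end SD

section Construct

variable {n : ℕ} {P : Set (Fin n → ℝ)}

lemma hull_facts (hP : IsLatticePolytope P) :
    (Set.extremePoints ℝ P).Finite ∧ (∀ v ∈ Set.extremePoints ℝ P, IsLatticePt v) ∧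
      P = convexHull ℝ (Set.extremePoints ℝ P) := by
  obtain ⟨V, hV, rfl⟩ := hP
  have hsub : Set.extremePoints ℝ (convexHull ℝ (↑V : Set (Fin n → ℝ))) ⊆ ↑V :=
    extremePoints_convexHull_subset
  have hfin := V.finite_toSet.subset hsub
  refine ⟨hfin, fun v hv => hV v (hsub hv), ?_⟩
  have h1 := closure_convexHull_extremePoints (V.finite_toSet.isCompact_convexHull ℝ)
    (convex_convexHull ℝ (↑V : Set (Fin n → ℝ)))
  rw [(hfin.isClosed_convexHull ℝ).closure_eq] at h1
  exact h1.symm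

/-- an extreme point of a hull of a finite set is separated from the other points -/
lemma sep_extreme {K : Set (Fin n → ℝ)} {Z : Set (Fin n → ℝ)} (hZ : Z.Finite) (hK : Convex ℝ K)
    (hZK : Z ⊆ K) {z : Fin n → ℝ} (hz : z ∈ Set.extremePoints ℝ K) :
    ∃ f : (Fin n → ℝ) →ₗ[ℝ] ℝ, ∀ y ∈ Z, y ≠ z → f z < f y := by
  have hsub : convexHull ℝ (Z \ {z}) ⊆ K := convexHull_min (Set.sdiff_subset.trans hZK) hK
  have hnot : z ∉ convexHull ℝ (Z \ {z}) := by
    intro hmem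
    have h1 : z ∈ Set.extremePoints ℝ (convexHull ℝ (Z \ {z})) :=
      inter_extremePoints_subset_extremePoints_of_subset hsub ⟨hmem, hz⟩
    exact (extremePoints_convexHull_subset h1).2 rfl
  obtain ⟨f, u, h1, h2⟩ := geometric_hahn_banach_point_closed (convex_convexHull ℝ _)
    ((hZ.subset Set.sdiff_subset).isClosed_convexHull ℝ) hnot
  exact ⟨f.toLinearMap, fun y hy hne => h1.trans (h2 y (subset_convexHull ℝ _ ⟨hy, hne⟩))⟩

lemma pos_of_edges (hfin : (Set.extremePoints ℝ P).Finite)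
    (hull : P = convexHull ℝ (Set.extremePoints ℝ P)) {v : Fin n → ℝ}
    (hv : v ∈ Set.extremePoints ℝ P) (E : Module.Basis (Fin n) ℝ (Fin n → ℝ)) (c : Fin n → ℝ)
    (hc : ∀ i, 0 < c i)
    (hF : ∀ F : Set (Fin n → ℝ), (IsFace P F ∧ v ∈ F ∧ fdim F = 1) →
      ∃ i, F = segment ℝ v (v + c i • E i)) :
    ∀ x ∈ P, ∀ i, 0 ≤ E.coord i (x - v) := by
  have hconv : Convex ℝ P := by rw [hull]; exact convex_convexHull ℝ _
  set A := Set.extremePoints ℝ P with hA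
  have hAP : A ⊆ P := extremePoints_subset
  obtain ⟨f, hf⟩ := sep_extreme hfin hconv hAP hv
  have hf' : ∀ y ∈ A, y ≠ v → 0 < f y - f v := fun y hy hne => sub_pos.2 (hf y hy hne)
  let ζ : (Fin n → ℝ) → (Fin n → ℝ) := fun y => (f y - f v)⁻¹ • (y - v)
  set Z := ζ '' (A \ {v}) with hZ
  have hZfin : Z.Finite := (hfin.subset Set.sdiff_subset).image _
  have hfz : ∀ y ∈ A, y ≠ v → f (ζ y) = 1 := by
    intro y hy hne
    simp only [ζ, map_smul, map_sub, smul_eq_mul]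
    exact inv_mul_cancel₀ (hf' y hy hne).ne'
  have hζ : ∀ y ∈ A, y ≠ v → y - v = (f y - f v) • ζ y := by
    intro y hy hne
    simp only [ζ, smul_smul]
    rw [mul_inv_cancel₀ (hf' y hy hne).ne', one_smul]
  set K := convexHull ℝ Z with hK
  have hext : ∀ z ∈ Set.extremePoints ℝ K, ∀ i, 0 ≤ E.coord i z := by
    intro z hz i
    obtain ⟨k, hk⟩ := sep_extreme hZfin (convex_convexHull ℝ Z) (subset_convexHull ℝ Z) hz
    have hzZ : z ∈ Z := extremePoints_convexHull_subset hz
    obtain ⟨y0, ⟨hy0A, hy0v⟩, hy0⟩ := hzZ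
    have hy0v : y0 ≠ v := hy0v
    let g : (Fin n → ℝ) →ₗ[ℝ] ℝ := k - k z • f
    have hg : ∀ y ∈ A, y ≠ v → g (ζ y) = k (ζ y) - k z := by
      intro y hy hne
      simp [g, hfz y hy hne]
    have hgA : ∀ y ∈ A, g v ≤ g y ∧ (g y = g v → ∃ t : ℝ, y = v + t • z) := by
      intro y hy
      by_cases hne : y = v
      · subst hne; exact ⟨le_rfl, fun _ => ⟨0, by simp⟩⟩
      have h1 := hf' y hy hne
      have h2 : g y - g v = (f y - f v) * (k (ζ y) - k z) := by
        rw [← hg y hy hne, ← map_sub, hζ y hy hne, map_smul, smul_eq_mul]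
      by_cases hzy : ζ y = z
      · refine ⟨?_, fun _ => ⟨f y - f v, ?_⟩⟩
        · rw [hzy, sub_self, mul_zero] at h2; linarith
        · rw [← hzy, ← hζ y hy hne]; abel
      · have h3 := hk (ζ y) ⟨y, ⟨hy, hne⟩, rfl⟩ hzy
        have h4 : 0 < g y - g v := by rw [h2]; exact mul_pos h1 (by linarith)
        exact ⟨by linarith, fun h => by linarith⟩
    have hgP : ∀ y ∈ P, g v ≤ g y ∧ (g y = g v → ∃ t : ℝ, y = v + t • z) := by
      have hcv : Convex ℝ {y | g v ≤ g y ∧ (g y = g v → ∃ t : ℝ, y = v + t • z)} := by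
        rw [convex_iff_openSegment_subset]
        rintro x ⟨hx1, hx2⟩ y ⟨hy1, hy2⟩ _ ⟨a, b, ha, hb, hab, rfl⟩
        simp only [Set.mem_ofPred_eq, map_add, map_smul, smul_eq_mul]
        have e : a * g x + b * g y = g v + a * (g x - g v) + b * (g y - g v) := by
          have : a = 1 - b := by linarith
          rw [this]; ring
        have h1 : 0 ≤ a * (g x - g v) := mul_nonneg ha.le (by linarith)
        have h2 : 0 ≤ b * (g y - g v) := mul_nonneg hb.le (by linarith)
        refine ⟨by linarith, fun heq => ?_⟩
        have h3 : a * (g x - g v) = 0 := by linarith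
        have h4 : b * (g y - g v) = 0 := by linarith
        have h5 : g x = g v := by
          rcases mul_eq_zero.1 h3 with h | h <;> linarith
        have h6 : g y = g v := by
          rcases mul_eq_zero.1 h4 with h | h <;> linarith
        obtain ⟨t, ht⟩ := hx2 h5
        obtain ⟨s, hs⟩ := hy2 h6
        refine ⟨a * t + b * s, ?_⟩
        rw [ht, hs]
        have : v = a • v + b • v := by rw [← add_smul, hab, one_smul]
        conv_rhs => rw [this]
        module
      intro y hy
      exact convexHull_min hgA hcv (hull.subset hy)
    have hface : IsFace P {x ∈ P | g x = g v} :=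
      ⟨⟨v, hAP hv, rfl⟩, g, g v, fun x hx => (hgP x hx).1, rfl⟩
    have hy0F : y0 ∈ {x ∈ P | g x = g v} := by
      refine ⟨hAP hy0A, ?_⟩
      have h2 : g y0 - g v = (f y0 - f v) * (k (ζ y0) - k z) := by
        rw [← hg y0 hy0A hy0v, ← map_sub, hζ y0 hy0A hy0v, map_smul, smul_eq_mul]
      rw [hy0, sub_self, mul_zero] at h2
      linarith
    have hvF : v ∈ {x ∈ P | g x = g v} := ⟨hAP hv, rfl⟩
    have hz0 : z ≠ 0 := by
      rintro rfl
      have := hfz y0 hy0A hy0v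
      rw [hy0] at this; simp at this
    have hspan : vectorSpan ℝ {x ∈ P | g x = g v} = Submodule.span ℝ {z} := by
      apply le_antisymm
      · rw [vectorSpan_def, Submodule.span_le]
        rintro _ ⟨x, ⟨hx, hxg⟩, y, ⟨hy, hyg⟩, rfl⟩
        obtain ⟨t, ht⟩ := (hgP x hx).2 hxg
        obtain ⟨s, hs⟩ := (hgP y hy).2 hyg
        rw [SetLike.mem_coe, Submodule.mem_span_singleton]
        exact ⟨t - s, by simp only [vsub_eq_sub]; rw [ht, hs]; module⟩
      · rw [Submodule.span_singleton_le_iff_mem, ← hy0]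
        exact Submodule.smul_mem _ _ (vsub_mem_vectorSpan ℝ hy0F hvF)
    have hdim : fdim {x ∈ P | g x = g v} = 1 := by
      unfold fdim
      rw [hspan, finrank_span_singleton hz0]
    obtain ⟨j, hj⟩ := hF _ ⟨hface, hvF, hdim⟩
    rw [hj] at hy0F
    rw [segment_eq_image'] at hy0F
    obtain ⟨t, ⟨ht0, ht1⟩, ht⟩ := hy0F
    have h1 : y0 - v = (t * c j) • E j := by
      rw [← ht]; simp only; module
    rw [← hy0]
    simp only [ζ]
    rw [h1, map_smul, map_smul]
    have h2 : 0 ≤ E.coord i (E j) := by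
      simp only [Module.Basis.coord_apply, Module.Basis.repr_self, Finsupp.single_apply]
      split_ifs <;> norm_num
    have h3 := hf' y0 hy0A hy0v
    have h4 := hc j
    simp only [smul_eq_mul]
    positivity
  have hKe : K = convexHull ℝ (Set.extremePoints ℝ K) := by
    have hs : Set.extremePoints ℝ K ⊆ Z := extremePoints_convexHull_subset
    have h1 := closure_convexHull_extremePoints (hZfin.isCompact_convexHull ℝ)
      (convex_convexHull ℝ Z)
    rw [((hZfin.subset hs).isClosed_convexHull ℝ).closure_eq] at h1
    exact h1.symm
  intro x hx i
  have hKpos : ∀ z ∈ K, 0 ≤ E.coord i z := by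
    intro z hz
    have hs : convexHull ℝ (Set.extremePoints ℝ K) ⊆ {z | 0 ≤ E.coord i z} :=
      convexHull_min (fun z hz => hext z hz i) (convex_halfSpace_ge (E.coord i).isLinear _)
    exact hs (hKe.subset hz)
  have hApos : ∀ y ∈ A, E.coord i v ≤ E.coord i y := by
    intro y hy
    by_cases hne : y = v
    · rw [hne]
    rw [← sub_nonneg, ← map_sub, hζ y hy hne, map_smul]
    exact mul_nonneg (hf' y hy hne).le (hKpos _ (subset_convexHull ℝ _ ⟨y, ⟨hy, hne⟩, rfl⟩))
  have hs : convexHull ℝ A ⊆ {y | E.coord i v ≤ E.coord i y} :=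
    convexHull_min hApos (convex_halfSpace_ge (E.coord i).isLinear _)
  have := hs (hull.subset hx)
  rw [map_sub]
  exact sub_nonneg.2 this

lemma vertex_data (hfull : affineSpan ℝ P = ⊤) (hsm : IsSmoothPoly P) {v : Fin n → ℝ}
    (hv : v ∈ Set.extremePoints ℝ P) :
    ∃ (E : Module.Basis (Fin n) ℝ (Fin n → ℝ)) (c : Fin n → ℝ), (∀ i, 0 < c i) ∧
      (∀ i, IsLatticePt (E i)) ∧ (∀ i z, IsLatticePt z → ∃ m : ℤ, E.coord i z = m) ∧
      ∀ F : Set (Fin n → ℝ), (IsFace P F ∧ v ∈ F ∧ fdim F = 1) ↔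
        ∃ i, F = segment ℝ v (v + c i • E i) := by
  have hvs : vectorSpan ℝ P = ⊤ := by
    rw [← direction_affineSpan, hfull, AffineSubspace.direction_top]
  have hdim : fdim P = n := by
    unfold fdim; rw [hvs]; simp
  have h := hsm v hv
  rw [hdim] at h
  obtain ⟨w, c, hc, -, hli, -, hlat, hF⟩ := h
  let E : Module.Basis (Fin n) ℝ (Fin n → ℝ) := basisOfLinearIndependentOfCardEqFinrank' _ hli (by simp)
  have hE : ∀ i, E i = fun j => (w i j : ℝ) := by
    intro i; simp [E]
  refine ⟨E, c, hc, ?_, ?_, ?_⟩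
  · intro i j; rw [hE]; exact ⟨w i j, rfl⟩
  · intro i z hz
    choose y hy using hz
    have hz' : z = fun j => (y j : ℝ) := funext hy
    obtain ⟨m, hm⟩ := hlat y (by rw [hvs]; trivial)
    refine ⟨m i, ?_⟩
    rw [hz', hm]
    simp only [← hE]
    simp [Finsupp.single_apply]
  · intro F
    rw [hF]
    simp only [hE]

lemma edge_end_extreme {v : Fin n → ℝ} {d : Fin n → ℝ} (hd : d ≠ 0)
    (hF : IsFace P (segment ℝ v (v + d))) : v + d ∈ Set.extremePoints ℝ P := by
  obtain ⟨-, u, m, hu, hFe⟩ := hF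
  have hend : v + d ∈ {x ∈ P | u x = m} := hFe ▸ right_mem_segment ℝ v (v + d)
  have key : ∀ x ∈ P, u x = m → ∃ t : ℝ, t ≤ 1 ∧ x = v + t • d := by
    intro x hx hxm
    have : x ∈ segment ℝ v (v + d) := by rw [hFe]; exact ⟨hx, hxm⟩
    rw [segment_eq_image'] at this
    obtain ⟨t, ⟨_, ht1⟩, ht⟩ := this
    exact ⟨t, ht1, by rw [← ht]; simp⟩
  rw [mem_extremePoints]
  refine ⟨hend.1, ?_⟩
  rintro x hx y hy ⟨a, b, ha, hb, hab, heq⟩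
  have h1 := hu x hx
  have h2 := hu y hy
  have h3 : a * u x + b * u y = m := by
    have := hend.2
    rw [← heq, map_add, map_smul, map_smul] at this
    exact this
  have e : a * (u x - m) + b * (u y - m) = 0 := by
    have : a = 1 - b := by linarith
    rw [this] at h3 ⊢; linarith
  have h4 : 0 ≤ a * (u x - m) := mul_nonneg ha.le (by linarith)
  have h5 : 0 ≤ b * (u y - m) := mul_nonneg hb.le (by linarith)
  have h6 : u x = m := by
    rcases mul_eq_zero.1 (show a * (u x - m) = 0 by linarith) with h | h <;> linarith
  have h7 : u y = m := by
    rcases mul_eq_zero.1 (show b * (u y - m) = 0 by linarith) with h | h <;> linarith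
  obtain ⟨s, hs, hxs⟩ := key x hx h6
  obtain ⟨t, ht, hyt⟩ := key y hy h7
  have h8 : (a * s + b * t - 1) • d = 0 := by
    have h9 : a • (v + s • d) + b • (v + t • d) = v + d := by rw [← hxs, ← hyt]; exact heq
    have hb' : b = 1 - a := by linarith
    have h10 : a • (v + s • d) + b • (v + t • d) - (v + d) = (a * s + b * t - 1) • d := by
      rw [hb']; module
    rw [← h10, h9, sub_self]
  have h9 : a * s + b * t - 1 = 0 := (smul_eq_zero.1 h8).resolve_right hd
  have h10 : 0 ≤ a * (1 - s) := mul_nonneg ha.le (by linarith)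
  have h11 : 0 ≤ b * (1 - t) := mul_nonneg hb.le (by linarith)
  have hs1 : s = 1 := by
    rcases mul_eq_zero.1 (show a * (1 - s) = 0 by linarith) with h | h <;> linarith
  have ht1 : t = 1 := by
    rcases mul_eq_zero.1 (show b * (1 - t) = 0 by linarith) with h | h <;> linarith
  rw [hxs, hyt, hs1, ht1, one_smul]
  exact ⟨rfl, rfl⟩

theorem exists_SD (hP : IsLatticePolytope P) (hfull : affineSpan ℝ P = ⊤) (hsm : IsSmoothPoly P) :
    ∃ ι : Type, Finite ι ∧ Nonempty ι ∧ Nonempty (SD P ι) := by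
  obtain ⟨hfin, hlat, hull⟩ := hull_facts hP
  have hPne : P.Nonempty := by
    rw [← affineSpan_nonempty (k := ℝ), hfull]
    exact ⟨0, trivial⟩
  have hAne : (Set.extremePoints ℝ P).Nonempty := by
    rw [hull] at hPne
    exact convexHull_nonempty_iff.1 hPne
  choose E c hc hlE hlc hF using fun v : Set.extremePoints ℝ P => vertex_data hfull hsm v.2
  have hd : ∀ v i, c v i • E v i ≠ 0 := by
    intro v i h
    rcases smul_eq_zero.1 h with h | h
    · exact (hc v i).ne' h
    · exact (E v).ne_zero i h
  have hface : ∀ (v : Set.extremePoints ℝ P) (i : Fin n), IsFace P (segment ℝ (v : Fin n → ℝ) (v + c v i • E v i)) ∧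
      fdim (segment ℝ (v : Fin n → ℝ) (v + c v i • E v i)) = 1 := by
    intro v i
    have := (hF v _).2 ⟨i, rfl⟩
    exact ⟨this.1, this.2.2⟩
  let nb : Set.extremePoints ℝ P → Fin n → Set.extremePoints ℝ P := fun v i =>
    ⟨v + c v i • E v i, edge_end_extreme (hd v i) (hface v i).1⟩
  have hcoord : ∀ v i j, (E v).coord i (E v j) = if i = j then 1 else 0 := by
    intro v i j
    simp [Module.Basis.coord_apply, Finsupp.single_apply, eq_comm]
  have hsubint : ∀ v i (y z : Fin n → ℝ), IsLatticePt y → IsLatticePt z →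
      ∃ m : ℤ, (E v).coord i (y - z) = m := by
    intro v i y z hy hz
    obtain ⟨a, ha⟩ := hlc v i y hy
    obtain ⟨b, hb⟩ := hlc v i z hz
    exact ⟨a - b, by rw [map_sub, ha, hb]; simp⟩
  have hlen : ∀ v i, ∃ l : ℕ, 1 ≤ l ∧ c v i = l := by
    intro v i
    obtain ⟨m, hm⟩ := hsubint v i (nb v i) v (hlat _ (nb v i).2) (hlat _ v.2)
    simp only [nb, add_sub_cancel_left, map_smul, hcoord, if_true, smul_eq_mul, mul_one] at hm
    have h1 := hc v i
    rw [hm] at h1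
    have h2 : 0 < m := by exact_mod_cast h1
    refine ⟨m.toNat, by omega, ?_⟩
    rw [hm]
    have : (m.toNat : ℤ) = m := Int.toNat_of_nonneg h2.le
    exact_mod_cast this.symm
  choose len hlen1 hlenc using hlen
  have hbk : ∀ v i, ∃ k, E (nb v i) k = - E v i := by
    intro v i
    obtain ⟨k, hk⟩ := (hF (nb v i) _).1 ⟨(hface v i).1, right_mem_segment ℝ _ _, (hface v i).2⟩
    refine ⟨k, ?_⟩
    have h1 : (v : Fin n → ℝ) ∈ segment ℝ (nb v i : Fin n → ℝ) (nb v i + c (nb v i) k • E (nb v i) k) := by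
      rw [← hk]; exact left_mem_segment ℝ _ _
    rw [segment_eq_image'] at h1
    obtain ⟨t, ⟨ht0, -⟩, ht⟩ := h1
    set r := t * c (nb v i) k with hr
    have h2 : c v i • E v i = - (r • E (nb v i) k) := by
      have h3 : (nb v i : Fin n → ℝ) = v + c v i • E v i := rfl
      simp only [add_sub_cancel_left, smul_smul] at ht
      rw [← hr] at ht
      have h4 : (v : Fin n → ℝ) + c v i • E v i + r • E (nb v i) k = v := by rw [← h3]; exact ht
      have h5 : c v i • E v i + r • E (nb v i) k = 0 := by
        have := congrArg (fun x => x - (v : Fin n → ℝ)) h4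
        simp only [sub_self] at this
        rw [← this]; abel
      exact eq_neg_of_add_eq_zero_left h5
    have hr0 : 0 ≤ r := mul_nonneg ht0 (hc _ _).le
    obtain ⟨a, ha⟩ := hlc v i _ (hlE (nb v i) k)
    obtain ⟨b, hb⟩ := hlc (nb v i) k _ (hlE v i)
    have h3 := congrArg ((E v).coord i) h2
    rw [map_smul, map_neg, map_smul, hcoord, if_pos rfl, ha] at h3
    have h4 := congrArg ((E (nb v i)).coord k) h2
    rw [map_smul, map_neg, map_smul, hcoord, if_pos rfl, hb] at h4
    simp only [smul_eq_mul, mul_one] at h3 h4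
    have hcp := hc v i
    have hab : a * b = 1 := by
      have : c v i * ((a:ℝ) * b) = c v i * 1 := by
        calc c v i * ((a:ℝ) * b) = (c v i * b) * a := by ring
          _ = -(r * a) := by rw [h4]; ring
          _ = c v i * 1 := by rw [← h3, mul_one]
      have := mul_left_cancel₀ hcp.ne' this
      exact_mod_cast this
    have ha1 : a = -1 := by
      rcases Int.eq_one_or_neg_one_of_mul_eq_one hab with h | h
      · rw [h] at h3; push_cast at h3; linarith
      · exact h
    have hrc : r = c v i := by rw [h3, ha1]; push_cast; ring
    rw [hrc, ← smul_neg] at h2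
    have := smul_right_injective _ hcp.ne' h2
    rw [this]; simp
  choose bk hbk' using hbk
  refine ⟨Set.extremePoints ℝ P, hfin.to_subtype, hAne.to_subtype, ⟨{
    p := fun v => v
    inj := Subtype.val_injective
    hull := by rw [Subtype.range_coe]; exact hull
    E := E
    len := len
    len_pos := hlen1
    nb := nb
    p_nb := by intro w i; rw [← hlenc]
    pos := fun w => pos_of_edges hfin hull w.2 (E w) (c w) (hc w) (fun F => (hF w F).1)
    bk := bk
    E_bk := hbk'
    lat_p := fun w => hlat _ w.2
    lat_E := hlE
    lat_coord := hlc }⟩⟩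

end Construct

/-- A smooth full-dimensional lattice polytope `P ⊆ ℝ^n` satisfies
`cd(P) ≥ (n+3)/2` iff `μ(P) = τ(P) = cd(P)` and `cd(P) > n/2 + 1`. -/
theorem stmt12 {n : ℕ} (P : Set (Fin n → ℝ)) (hP : IsLatticePolytope P)
    (hfull : affineSpan ℝ P = ⊤) (hsm : IsSmoothPoly P) :
    ((n : ℝ) + 3) / 2 ≤ (codeg P : ℝ) ↔
      ((sSup (muSet P))⁻¹ = (sSup (tauSet P))⁻¹ ∧
       (sSup (tauSet P))⁻¹ = (codeg P : ℝ) ∧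
       (n : ℝ) / 2 + 1 < (codeg P : ℝ)) := by
  obtain ⟨ι, hfin, hne, ⟨D⟩⟩ := exists_SD hP hfull hsm
  constructor
  · intro h
    have h1 : (n : ℝ) + 3 ≤ 2 * (codeg P : ℝ) := by linarith
    have h2 : n + 3 ≤ 2 * codeg P := by exact_mod_cast h1
    obtain ⟨hmu, htau⟩ := D.main h2
    rw [hmu, htau, inv_inv]
    exact ⟨rfl, rfl, by linarith⟩
  · rintro ⟨-, -, h⟩
    have h1 : (n : ℝ) + 2 < 2 * (codeg P : ℝ) := by linarith
    have h2 : n + 2 < 2 * codeg P := by exact_mod_cast h1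
    have h3 : n + 3 ≤ 2 * codeg P := h2
    have h4 : (n : ℝ) + 3 ≤ 2 * (codeg P : ℝ) := by exact_mod_cast h3
    linarith
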